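/- Let h ≥ 2 be an integer. There exists a constant ξ = ξ(h, K) with ξ < 1 such that for every u ∈ ℕ and all distinct prime ideals p_1, …, p_u of O_K, the number of h-full ideals m of O_K with N(m) ≤ x and p_i | m for all i = 1, …, u equals (∏_{i=1}^u 1/(N(p_i)(1 − N(p_i)^{−1/h} + N(p_i)^{−1}))) · κ γ_h x^{1/h} + O_{h,u}(x^{ξ/h} / ∏_{i=1}^u N(p_i)^{ξ}), where the implied constant depends only on h, u, and K, and γ_h = ∏_p (1 + (N(p) − N(p)^{1/h})/(N(p)²(N(p)^{1/h} − 1))) (product over all prime ideals p). -/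

import Mathlib

/-!
The number of ideals of norm at most `y` is `κ y + O(y ^ θ)` for some `θ < 1`: up to units, the
ideals in a given class are the lattice points in a dilate of the bounded cone `normLeOne K`. The
boundary of the cone is controlled by the image of the boundary of the unit cube under a Lipschitz
map, so its `ε`-neighbourhood has volume `O(ε)`, and this bounds the error in counting lattice
points by volume.

Every `h`-full ideal divisible by the primes `p₁, …, pᵤ` is uniquely `a ^ h * b`, where the exponent
of each prime in `b` lies in a fixed system of representatives modulo `h`: `h, …, 2h - 1` at the
`pᵢ`, and `0, h + 1, …, 2h - 1` at the other primes. Summing the number of `a` of norm at most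
`(x / N(b)) ^ (1 / h)` over `b` gives the main term `κ x ^ (1 / h) ∑ N(b) ^ (-1 / h)`, with an error
of order `x ^ (θ / h) ∑ N(b) ^ (-θ / h)`. Both sums are Euler products, which converge as soon as
`θ > h / (h + 1)`; their factors at the `pᵢ` yield the stated densities in the main term and the
saving `∏ N(pᵢ) ^ (-θ)` in the error.
-/

open Filter Topology
open scoped BigOperators

noncomputable section

variable (K : Type) [Field K] [NumberField K]

/-- `m` is an `h`-full ideal: every prime ideal dividing `m` divides it to order at least `h`. -/
def IsHFull (h : ℕ) (m : Ideal (NumberField.RingOfIntegers K)) : Prop :=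
  m ≠ 0 ∧ ∀ p : Ideal (NumberField.RingOfIntegers K), p.IsPrime → p ∣ m → p ^ h ∣ m

/-- The residue `κ` of the Dedekind zeta function of `K` at `s = 1`. -/
def kappa : ℝ :=
  (2 ^ NumberField.InfinitePlace.nrRealPlaces K *
      (2 * Real.pi) ^ NumberField.InfinitePlace.nrComplexPlaces K *
      (NumberField.classNumber K) * NumberField.Units.regulator K) /
    ((NumberField.Units.torsionOrder K) * Real.sqrt |(NumberField.discr K : ℝ)|)

/-- The constant `γ_h`, an infinite product over the (nonzero) prime ideals of `O_K`. -/
def gammaH (h : ℕ) : ℝ :=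
  ∏' p : {p : Ideal (NumberField.RingOfIntegers K) // p.IsPrime ∧ p ≠ ⊥},
    (1 + ((Ideal.absNorm p.1 : ℝ) - (Ideal.absNorm p.1 : ℝ) ^ ((1 : ℝ)/h)) /
      ((Ideal.absNorm p.1 : ℝ) ^ 2 * ((Ideal.absNorm p.1 : ℝ) ^ ((1 : ℝ)/h) - 1)))

section LatticePoints

open MeasureTheory Metric Module Pointwise Asymptotics

section Frontier

variable {V : Type*} [NormedAddCommGroup V] [NormedSpace ℝ V]

theorem exists_mem_segment_frontier {S : Set V} {x y : V} (hx : x ∈ S) (hy : y ∉ S) :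
    ∃ z ∈ segment ℝ x y, z ∈ frontier S := by
  have hpre := isPreconnected_iff_preconnectedSpace.mp (convex_segment (𝕜 := ℝ) x y).isPreconnected
  obtain ⟨z, hz⟩ := nonempty_frontier_iff.mpr
    ⟨(⟨⟨x, left_mem_segment ℝ x y⟩, hx⟩ : ((↑) ⁻¹' S : Set (segment ℝ x y)).Nonempty),
      fun h ↦ hy (Set.eq_univ_iff_forall.1 h ⟨y, right_mem_segment ℝ x y⟩)⟩
  exact ⟨z, z.2, continuous_subtype_val.frontier_preimage_subset S hz⟩

theorem mem_cthickening_frontier {S : Set V} {x y : V} {ε : ℝ} (hxy : dist x y ≤ ε)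
    (hS : ¬(x ∈ S ↔ y ∈ S)) : x ∈ cthickening ε (frontier S) := by
  obtain ⟨z, hzxy, hz⟩ : ∃ z ∈ segment ℝ x y, z ∈ frontier S := by
    by_cases hx : x ∈ S
    · exact exists_mem_segment_frontier hx (by tauto)
    · rw [segment_symm]
      exact exists_mem_segment_frontier (by tauto) hx
  have := dist_add_dist_of_mem_segment hzxy
  exact mem_cthickening_of_dist_le x z ε _ hz (by linarith [dist_nonneg (x := z) (y := y)])

theorem frontier_smul {c : ℝ} (hc : c ≠ 0) (S : Set V) : frontier (c • S) = c • frontier S :=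
  ((Homeomorph.smulOfNeZero c hc).image_frontier S).symm

theorem cthickening_smul {c : ℝ} (hc : 0 < c) (ε : ℝ) (S : Set V) :
    cthickening (c * ε) (c • S) = c • cthickening ε S := by
  ext x
  rw [Set.mem_smul_set_iff_inv_smul_mem₀ hc.ne', mem_cthickening_iff, mem_cthickening_iff]
  nth_rewrite 1 [← smul_inv_smul₀ hc.ne' x]
  rw [infEDist_smul₀ hc.ne', ENNReal.smul_def, smul_eq_mul, ENNReal.ofReal_mul hc.le,
    Real.nnnorm_of_nonneg hc.le, ← ENNReal.ofReal_coe_nnreal]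
  exact ENNReal.mul_le_mul_iff_right (by simpa using hc) ENNReal.ofReal_ne_top

end Frontier

variable {V ι : Type*} [NormedAddCommGroup V] [NormedSpace ℝ V] [Fintype ι] (b : Basis ι ℝ V)

theorem mem_vadd_fundamentalDomain_iff {l : V} (hl : l ∈ Submodule.span ℤ (Set.range b)) (y : V) :
    y ∈ l +ᵥ ZSpan.fundamentalDomain b ↔ (ZSpan.floor b y : V) = l := by
  rw [Set.mem_vadd_set_iff_neg_vadd_mem, vadd_eq_add, ← ZSpan.fract_eq_self,
    ZSpan.fract_zSpan_add b y (neg_mem hl), ZSpan.fract_apply, neg_add_eq_sub, sub_right_inj]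

theorem preimage_floor_eq_biUnion_vadd (S : Set V) :
    {y | (ZSpan.floor b y : V) ∈ S} =
      ⋃ l ∈ S ∩ Submodule.span ℤ (Set.range b), l +ᵥ ZSpan.fundamentalDomain b := by
  ext y
  simp only [Set.mem_iUnion, exists_prop]
  constructor
  · exact fun hy ↦ ⟨_, ⟨hy, (ZSpan.floor b y).2⟩,
      (mem_vadd_fundamentalDomain_iff b (ZSpan.floor b y).2 y).2 rfl⟩
  · rintro ⟨l, ⟨hlS, hl⟩, hy⟩
    rwa [Set.mem_ofPred_eq, (mem_vadd_fundamentalDomain_iff b hl y).1 hy]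

variable [MeasurableSpace V] [BorelSpace V] [FiniteDimensional ℝ V] (μ : Measure V)
  [μ.IsAddHaarMeasure] {S : Set V}

theorem measurableSet_preimage_floor (hS : Bornology.IsBounded S) :
    MeasurableSet {y | (ZSpan.floor b y : V) ∈ S} := by
  rw [preimage_floor_eq_biUnion_vadd]
  exact .biUnion (ZSpan.setFinite_inter b hS).countable fun l _ ↦
    (ZSpan.fundamentalDomain_measurableSet b).const_vadd l

theorem measureReal_preimage_floor (hS : Bornology.IsBounded S) :
    μ.real {y | (ZSpan.floor b y : V) ∈ S} =
      (S ∩ Submodule.span ℤ (Set.range b)).ncard * μ.real (ZSpan.fundamentalDomain b) := by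
  have hfin := ZSpan.setFinite_inter b hS
  have hdisj : (hfin.toFinset : Set V).PairwiseDisjoint
      fun l ↦ l +ᵥ ZSpan.fundamentalDomain b := by
    intro l hl l' hl' hne
    rw [Set.Finite.coe_toFinset] at hl hl'
    refine Set.disjoint_left.2 fun y hy hy' ↦ hne ?_
    rw [← (mem_vadd_fundamentalDomain_iff b hl.2 y).1 hy,
      (mem_vadd_fundamentalDomain_iff b hl'.2 y).1 hy']
  have hUnion := preimage_floor_eq_biUnion_vadd b S
  simp_rw [← hfin.mem_toFinset] at hUnion
  rw [hUnion, measureReal_biUnion_finset hdisj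
    (fun l _ ↦ (ZSpan.fundamentalDomain_measurableSet b).const_vadd l)
    fun l _ ↦ by simpa using (ZSpan.fundamentalDomain_isBounded b).measure_lt_top.ne]
  simp [measureReal_def, measure_vadd, Set.ncard_eq_toFinset_card _ hfin]

/-- Replacing each lattice point of `S` by its translate of the fundamental domain changes `S`
only within the diameter of that domain from `frontier S`. -/
theorem abs_ncard_lattice_sub_le (hSb : Bornology.IsBounded S) (hSm : MeasurableSet S) :
    |((S ∩ Submodule.span ℤ (Set.range b)).ncard : ℝ) * μ.real (ZSpan.fundamentalDomain b) -
      μ.real S| ≤ μ.real (cthickening (∑ i, ‖b i‖) (frontier S)) := by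
  have hdiff : symmDiff {y | (ZSpan.floor b y : V) ∈ S} S ⊆
      cthickening (∑ i, ‖b i‖) (frontier S) := by
    intro y hy
    refine mem_cthickening_frontier (y := (ZSpan.floor b y : V)) ?_ ?_
    · rw [dist_eq_norm, ← ZSpan.fract_apply]
      exact ZSpan.norm_fract_le b y
    · rw [Set.mem_symmDiff, Set.mem_ofPred_eq] at hy
      tauto
  have hfin : μ (cthickening (∑ i, ‖b i‖) (frontier S)) ≠ ⊤ :=
    (hSb.closure.subset frontier_subset_closure).cthickening.measure_lt_top.ne
  rw [← measureReal_preimage_floor b μ hSb]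
  refine le_trans ?_ (measureReal_mono hdiff hfin)
  refine abs_measureReal_sub_le_measureReal_symmDiff'
    (measurableSet_preimage_floor b hSb).nullMeasurableSet hSm.nullMeasurableSet ?_
    hSb.measure_lt_top.ne
  rw [preimage_floor_eq_biUnion_vadd]
  refine (measure_biUnion_lt_top (ZSpan.setFinite_inter b hSb) fun l _ ↦ ?_).ne
  simpa using (ZSpan.fundamentalDomain_isBounded b).measure_lt_top

theorem isBigO_ncard_lattice_smul {ι : Type*} [Finite ι] (b : Basis ι ℝ V) [Nontrivial V]
    (hSb : Bornology.IsBounded S) (hSm : MeasurableSet S)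
    (hfrontier : (fun ε ↦ μ.real (cthickening ε (frontier S))) =O[𝓝[>] 0] fun ε ↦ ε) :
    (fun t : ℝ ↦ ((t • S ∩ Submodule.span ℤ (Set.range b)).ncard : ℝ) *
        μ.real (ZSpan.fundamentalDomain b) - t ^ finrank ℝ V * μ.real S) =O[atTop]
      fun t ↦ t ^ (finrank ℝ V - 1) := by
  have := Fintype.ofFinite ι
  have := b.index_nonempty
  set B := ∑ i, ‖b i‖
  have hB : 0 < B :=
    Finset.sum_pos (fun i _ ↦ norm_pos_iff.2 (b.ne_zero i)) Finset.univ_nonempty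
  have hmeasure_smul {t : ℝ} (ht : 0 < t) (T : Set V) :
      μ.real (t • T) = t ^ finrank ℝ V * μ.real T := by
    rw [measureReal_def, Measure.addHaar_smul, ENNReal.toReal_mul,
      ENNReal.toReal_ofReal (abs_nonneg _), abs_of_pos (pow_pos ht _), measureReal_def]
  have hscale : Tendsto (fun t : ℝ ↦ B / t) atTop (𝓝[>] 0) :=
    tendsto_nhdsWithin_iff.2 ⟨tendsto_const_nhds.div_atTop tendsto_id,
      (eventually_gt_atTop 0).mono fun t ht ↦ div_pos hB ht⟩
  have hlayer := (isBigO_refl (fun t : ℝ ↦ t ^ finrank ℝ V) atTop).mul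
    (hfrontier.comp_tendsto hscale)
  refine .trans (.trans (.of_bound' ?_) hlayer) (.of_bound B ?_)
  · filter_upwards [eventually_gt_atTop 0] with t ht
    have hcount := abs_ncard_lattice_sub_le b μ (hSb.smul₀ t) (hSm.const_smul₀ t)
    rw [frontier_smul ht.ne', show ∑ i, ‖b i‖ = t * (B / t) by field_simp; rfl, cthickening_smul ht,
      hmeasure_smul ht, hmeasure_smul ht] at hcount
    exact hcount.trans (le_abs_self _)
  · filter_upwards [eventually_gt_atTop 0] with t ht
    rw [Function.comp_apply, Real.norm_of_nonneg (by positivity),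
      Real.norm_of_nonneg (by positivity)]
    obtain ⟨d, hd⟩ := Nat.exists_eq_succ_of_ne_zero (finrank_pos (R := ℝ) (M := V)).ne'
    rw [hd, Nat.succ_sub_one, pow_succ]
    exact le_of_eq (by field_simp)

end LatticePoints

section LipschitzFrontier

open MeasureTheory Metric Module
open scoped NNReal

theorem measureReal_cthickening_le_card_mul {V : Type*} [NormedAddCommGroup V] [NormedSpace ℝ V]
    [FiniteDimensional ℝ V] [MeasurableSpace V] [BorelSpace V] (μ : Measure V)
    [μ.IsAddHaarMeasure] {T : Set V} (hT : IsCompact T) {δ ε : ℝ} (hδ : 0 ≤ δ) (hε : 0 ≤ ε)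
    {A : Finset V} (hA : ∀ y ∈ T, ∃ a ∈ A, dist y a ≤ δ) :
    μ.real (cthickening ε T) ≤ A.card * ((δ + ε) ^ finrank ℝ V * μ.real (ball 0 1)) := by
  have hcover : cthickening ε T ⊆ ⋃ a ∈ A, closedBall a (δ + ε) := by
    rw [hT.cthickening_eq_biUnion_closedBall hε]
    intro x hx
    simp only [Set.mem_iUnion, exists_prop] at hx ⊢
    obtain ⟨y, hy, hxy⟩ := hx
    obtain ⟨a, ha, hya⟩ := hA y hy
    exact ⟨a, ha, (dist_triangle x y a).trans (by linarith [mem_closedBall.1 hxy])⟩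
  calc μ.real (cthickening ε T) ≤ μ.real (⋃ a ∈ A, closedBall a (δ + ε)) :=
        measureReal_mono hcover
          (measure_biUnion_lt_top A.finite_toSet fun _ _ ↦ measure_closedBall_lt_top).ne
    _ ≤ ∑ a ∈ A, μ.real (closedBall a (δ + ε)) := measureReal_biUnion_finset_le _ _
    _ = A.card * ((δ + ε) ^ finrank ℝ V * μ.real (ball 0 1)) := by
        simp_rw [Measure.addHaar_real_closedBall μ _ (add_nonneg hδ hε), Finset.sum_const,
          nsmul_eq_mul]

theorem frontier_unitCube {ι : Type*} [Finite ι] :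
    frontier (Set.Icc (0 : ι → ℝ) 1) = {c ∈ Set.Icc 0 1 | ∃ i, c i = 0 ∨ c i = 1} := by
  ext c
  rw [isClosed_Icc.frontier_eq, ← Set.pi_univ_Icc, interior_pi_set Set.finite_univ]
  simp only [Pi.zero_apply, Pi.one_apply, interior_Icc, Set.mem_sdiff, Set.mem_univ_pi,
    Set.mem_Icc, Set.mem_Ioo, Set.mem_ofPred_eq, not_forall, not_and_or, not_lt]
  refine and_congr_right fun hc ↦ exists_congr fun i ↦ ?_
  rw [(hc i).1.ge_iff_eq', (hc i).2.ge_iff_eq]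

theorem card_frontier_grid_le (ι : Type*) [Fintype ι] [DecidableEq ι] {N : ℕ} (hN : 0 < N) :
    ((Fintype.piFinset fun _ : ι ↦ Finset.range (N + 1)) \
        Fintype.piFinset fun _ ↦ Finset.Ioo 0 N).card ≤
      2 * Fintype.card ι * (N + 1) ^ (Fintype.card ι - 1) := by
  rw [Finset.card_sdiff_of_subset (Fintype.piFinset_subset _ _ fun _ _ hj ↦
    Finset.mem_range_succ_iff.2 (Finset.mem_Ioo.1 hj).2.le)]
  have hpow := abs_pow_sub_pow_le ((N : ℤ) + 1) (N - 1) (Fintype.card ι)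
  rw [add_sub_sub_cancel, one_add_one_eq_two, abs_two, abs_of_pos (by lia : 0 < (N : ℤ) + 1),
    abs_of_nonneg (by lia : 0 ≤ (N : ℤ) - 1), max_eq_left (by lia)] at hpow
  rw [Fintype.card_piFinset, Fintype.card_piFinset]
  simp only [Finset.prod_const, Finset.card_univ, Finset.card_range, Nat.card_Ioo, tsub_zero]
  zify [hN, Nat.pow_le_pow_left (by lia : N - 1 ≤ N + 1) (Fintype.card ι)]
  exact (le_abs_self _).trans hpow

theorem exists_net_frontier_unitCube {ι : Type*} [Fintype ι] {N : ℕ} (hN : 0 < N) :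
    ∃ A : Finset (ι → ℝ), ↑A ⊆ Set.Icc (0 : ι → ℝ) 1 ∧
      A.card ≤ 2 * Fintype.card ι * (N + 1) ^ (Fintype.card ι - 1) ∧
      ∀ c ∈ frontier (Set.Icc (0 : ι → ℝ) 1), ∃ a ∈ A, dist c a ≤ 1 / N := by
  classical
  have hN' : (0 : ℝ) < N := Nat.cast_pos.2 hN
  refine ⟨((Fintype.piFinset fun _ ↦ Finset.range (N + 1)) \
    Fintype.piFinset fun _ ↦ Finset.Ioo 0 N).image fun k i ↦ (k i : ℝ) / N, ?_,
    Finset.card_image_le.trans (card_frontier_grid_le ι hN), fun c hc ↦ ?_⟩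
  · intro a ha
    obtain ⟨k, hk, rfl⟩ := Finset.mem_image.1 ha
    have hkN i : k i ≤ N :=
      Finset.mem_range_succ_iff.1 (Fintype.mem_piFinset.1 (Finset.mem_sdiff.1 hk).1 i)
    exact ⟨fun i ↦ by simp only [Pi.zero_apply]; positivity,
      fun i ↦ div_le_one_of_le₀ (Nat.cast_le.2 (hkN i)) hN'.le⟩
  · rw [frontier_unitCube] at hc
    obtain ⟨⟨hc0, hc1⟩, i, hi⟩ := hc
    refine ⟨_, Finset.mem_image_of_mem _ (a := fun i ↦ ⌊c i * N⌋₊) ?_, ?_⟩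
    · simp only [Finset.mem_sdiff, Fintype.mem_piFinset, Finset.mem_range_succ_iff,
        Finset.mem_Ioo, not_forall]
      refine ⟨fun j ↦ Nat.floor_le_of_le (mul_le_of_le_one_left hN'.le (hc1 j)), i, ?_⟩
      rcases hi with hi | hi <;> simp [hi]
    · refine (dist_pi_le_iff (by positivity)).2 fun j ↦ ?_
      rw [Real.dist_eq, sub_div' hN'.ne', abs_div, abs_of_pos hN']
      gcongr
      have := Nat.floor_le (mul_nonneg (hc0 j) hN'.le)
      have := Nat.lt_floor_add_one (c j * N)
      rw [abs_le]
      constructor <;> linarith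

theorem exists_net_image_frontier_unitCube {V ι : Type*} [PseudoMetricSpace V] [Fintype ι]
    {f : (ι → ℝ) → V} {L : ℝ≥0} (hf : LipschitzOnWith L f (Set.Icc 0 1)) {ε : ℝ} (hε0 : 0 < ε)
    (hε1 : ε < 1) :
    ∃ A : Finset V, (A.card : ℝ) ≤ 2 * Fintype.card ι * (3 / ε) ^ (Fintype.card ι - 1) ∧
      ∀ y ∈ f '' frontier (Set.Icc 0 1), ∃ a ∈ A, dist y a ≤ L * ε := by
  classical
  have hN : 0 < ⌈1 / ε⌉₊ := Nat.ceil_pos.2 (by positivity)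
  set N := ⌈1 / ε⌉₊
  have hNε : 1 / (N : ℝ) ≤ ε := (one_div_le (by positivity) hε0).2 (Nat.le_ceil _)
  have hN3 : (N : ℝ) + 1 ≤ 3 / ε := by
    have := Nat.ceil_lt_add_one (one_div_pos.2 hε0).le
    have := one_lt_one_div hε0 hε1
    linarith [show 3 / ε = 3 * (1 / ε) by ring]
  obtain ⟨A, hAcube, hAcard, hA⟩ := exists_net_frontier_unitCube (ι := ι) hN
  refine ⟨A.image f, ?_, ?_⟩
  · calc ((A.image f).card : ℝ)
        ≤ (2 * Fintype.card ι * (N + 1) ^ (Fintype.card ι - 1) : ℕ) :=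
          Nat.cast_le.2 (Finset.card_image_le.trans hAcard)
      _ ≤ 2 * Fintype.card ι * (3 / ε) ^ (Fintype.card ι - 1) := by push_cast; gcongr
  · rintro _ ⟨c, hc, rfl⟩
    obtain ⟨a, ha, hca⟩ := hA c hc
    have hcube := isClosed_Icc.frontier_subset hc
    refine ⟨f a, Finset.mem_image_of_mem f ha, (hf.dist_le_mul c hcube a (hAcube ha)).trans ?_⟩
    gcongr
    exact hca.trans hNε

theorem isBigO_measureReal_cthickening_image_frontier_unitCube {V ι : Type*}
    [NormedAddCommGroup V] [NormedSpace ℝ V] [FiniteDimensional ℝ V] [MeasurableSpace V]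
    [BorelSpace V] (μ : Measure V) [μ.IsAddHaarMeasure] [Fintype ι]
    (hdim : finrank ℝ V = Fintype.card ι) {f : (ι → ℝ) → V} {L : ℝ≥0}
    (hf : LipschitzOnWith L f (Set.Icc 0 1)) :
    (fun ε ↦ μ.real (cthickening ε (f '' frontier (Set.Icc 0 1)))) =O[𝓝[>] 0] fun ε ↦ ε := by
  have hsub : frontier (Set.Icc (0 : ι → ℝ) 1) ⊆ Set.Icc 0 1 := isClosed_Icc.frontier_subset
  have hcompact : IsCompact (f '' frontier (Set.Icc 0 1)) :=
    (isCompact_Icc.of_isClosed_subset isClosed_frontier hsub).image_of_continuousOn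
      (hf.continuousOn.mono hsub)
  set d := Fintype.card ι
  refine .of_bound (2 * d * 3 ^ (d - 1) * ((L + 1) ^ d * μ.real (ball 0 1))) ?_
  filter_upwards [Ioo_mem_nhdsGT one_pos] with ε ⟨hε0, hε1⟩
  obtain ⟨A, hcard, hnet⟩ := exists_net_image_frontier_unitCube hf hε0 hε1
  rw [Real.norm_of_nonneg measureReal_nonneg, Real.norm_of_nonneg hε0.le]
  calc μ.real (cthickening ε (f '' frontier (Set.Icc 0 1)))
      ≤ A.card * ((L * ε + ε) ^ d * μ.real (ball 0 1)) :=
        hdim ▸ measureReal_cthickening_le_card_mul μ hcompact (by positivity) hε0.le hnet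
    _ ≤ 2 * d * (3 / ε) ^ (d - 1) * ((L * ε + ε) ^ d * μ.real (ball 0 1)) := by gcongr
    _ = 2 * d * 3 ^ (d - 1) * ((L + 1) ^ d * μ.real (ball 0 1)) * ε := by
        rcases Nat.eq_zero_or_pos d with hd | hd
        · simp [hd]
        · obtain ⟨k, hk⟩ := Nat.exists_eq_succ_of_ne_zero hd.ne'
          rw [hk, Nat.succ_sub_one, ← add_one_mul, mul_pow, div_pow, pow_succ ε]
          field_simp

end LipschitzFrontier

section NormLeOne

variable (K : Type*) [Field K] [NumberField K]

open MeasureTheory Metric Module Asymptotics NumberField NumberField.InfinitePlace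
  NumberField.mixedEmbedding NumberField.mixedEmbedding.fundamentalCone
  NumberField.Units.dirichletUnitTheorem
open scoped NNReal ENNReal

theorem cthickening_preimage_subset {X Y : Type*} [PseudoEMetricSpace X] [PseudoEMetricSpace Y]
    {f : X → Y} (hf : LipschitzWith 1 f) (ε : ℝ) (T : Set Y) :
    cthickening ε (f ⁻¹' T) ⊆ f ⁻¹' cthickening ε T := by
  intro x hx
  have hle : infEDist (f x) T ≤ infEDist x (f ⁻¹' T) :=
    le_infEDist.2 fun y hy ↦
      (infEDist_le_edist_of_mem (show f y ∈ T from hy)).trans (by simpa using hf x y)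
  exact hle.trans hx

open scoped Classical in
theorem lipschitzWith_normAtAllPlaces :
    LipschitzWith 1 (normAtAllPlaces : mixedSpace K → realSpace K) := by
  refine LipschitzWith.of_dist_le_mul fun x y ↦ ?_
  have hle (x y : mixedSpace K) (w : InfinitePlace K) :
      normAtPlace w x - normAtPlace w y ≤ dist x y := by
    have hnorm : normAtPlace w (x - y) ≤ ‖x - y‖ := by
      rw [norm_eq_sup'_normAtPlace]
      exact Finset.le_sup' (fun w ↦ normAtPlace w (x - y)) (Finset.mem_univ w)
    rw [dist_eq_norm]
    linarith [sub_add_cancel x y ▸ normAtPlace_add_le w (x - y) y]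
  rw [NNReal.coe_one, one_mul]
  refine (dist_pi_le_iff dist_nonneg).2 fun w ↦ abs_sub_le_iff.2 ⟨hle x y w, ?_⟩
  exact dist_comm x y ▸ hle y x w

open scoped Classical in
/-- The parametrization `c ↦ c w₀ • expMapBasis c'`, with `c'` equal to `c` away from `w₀` and
zero at `w₀`, of the vectors of absolute values of elements of `closure (normLeOne K)` by the unit
cube. Unlike `expMapBasis` it reaches the vertex of the cone at a finite distance, with
`c w₀ = 0`. -/
def coneParam (c : realSpace K) : realSpace K :=
  c w₀ • expMapBasis fun w ↦ if w = w₀ then 0 else c w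

theorem contDiff_expMapBasis : ContDiff ℝ 1 (expMapBasis : realSpace K → realSpace K) := by
  refine contDiff_pi.2 fun w ↦ Real.contDiff_exp.comp ?_
  exact contDiff_const.mul
    ((contDiff_apply ℝ ℝ w).comp (completeBasis K).equivFunL.symm.contDiff)

theorem exists_lipschitzOnWith_coneParam :
    ∃ L : ℝ≥0, LipschitzOnWith L (coneParam K) (Set.Icc 0 1) := by
  have hsmooth : ContDiff ℝ 1 (coneParam K) := by
    refine (contDiff_apply ℝ ℝ w₀).smul ((contDiff_expMapBasis K).comp (contDiff_pi.2 fun w ↦ ?_))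
    split_ifs
    exacts [contDiff_const, contDiff_apply ℝ ℝ w]
  exact hsmooth.locallyLipschitz.locallyLipschitzOn.exists_lipschitzOnWith_of_compact isCompact_Icc

theorem compactSet_subset_image_coneParam :
    compactSet K ⊆ coneParam K '' Set.Icc 0 1 := by
  classical
  rintro _ ⟨t, ht, _, ⟨y, hy, rfl⟩, rfl⟩
  have hy' w : y w ∈ if w = w₀ then {0} else Set.Icc (0 : ℝ) 1 := hy w trivial
  have hy0 : y w₀ = 0 := by simpa using hy' w₀
  refine ⟨Function.update y w₀ t, ?_, ?_⟩
  · rw [← Set.pi_univ_Icc]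
    intro w _
    rcases eq_or_ne w w₀ with rfl | hw
    · simpa using ht
    · simpa [hw] using hy' w
  · have : (fun w ↦ if w = w₀ then 0 else Function.update y w₀ t w) = y := by
      ext w
      rcases eq_or_ne w w₀ with rfl | hw
      · simp [hy0]
      · simp [hw]
    simp [coneParam, this]

theorem coneParam_mem_expMapBasis_image {c : realSpace K} (hc : c ∈ interior (Set.Icc 0 1)) :
    coneParam K c ∈ expMapBasis '' interior (paramSet K) := by
  classical
  rw [← Set.pi_univ_Icc, interior_pi_set Set.finite_univ] at hc
  have hc' w : c w ∈ Set.Ioo (0 : ℝ) 1 := by simpa using hc w trivial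
  refine ⟨Function.update c w₀ (Real.log (c w₀)), ?_, ?_⟩
  · rw [interior_paramSet]
    intro w _
    rcases eq_or_ne w w₀ with rfl | hw
    · simpa using Real.log_neg (hc' w₀).1 (hc' w₀).2
    · simpa [hw] using hc' w
  · rw [expMapBasis_apply'', Function.update_self, Real.exp_log (hc' w₀).1, coneParam]
    congr 2 with w
    split_ifs with hw
    · rfl
    · rw [Function.update_of_ne hw]

theorem frontier_normLeOne_subset :
    frontier (normLeOne K) ⊆ normAtAllPlaces ⁻¹' (coneParam K '' frontier (Set.Icc 0 1)) := by
  rintro x ⟨hcl, hint⟩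
  obtain ⟨c, hc, hcx⟩ := compactSet_subset_image_coneParam K (closure_normLeOne_subset K hcl)
  refine ⟨c, ⟨subset_closure hc, fun hci ↦ hint (subset_interior_normLeOne K ?_)⟩, hcx⟩
  exact Set.mem_preimage.2 (hcx ▸ coneParam_mem_expMapBasis_image K hci)

open scoped Classical in
theorem volume_preimage_normAtAllPlaces_le {T : Set (realSpace K)} (hT : MeasurableSet T) {R : ℝ}
    (hR : ∀ x ∈ T, ∀ w, x w ≤ R) :
    volume (normAtAllPlaces ⁻¹' T : Set (mixedSpace K)) ≤
      2 ^ nrRealPlaces K * .ofReal (2 * Real.pi) ^ nrComplexPlaces K *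
        (.ofReal R ^ nrComplexPlaces K * volume T) := by
  rw [volume_eq_two_pow_mul_two_pi_pow_mul_integral Set.preimage_image_preimage
    ((continuous_normAtAllPlaces K).measurable hT)]
  gcongr
  calc ∫⁻ x in normAtAllPlaces '' (normAtAllPlaces ⁻¹' T : Set (mixedSpace K)),
        ∏ w : {w : InfinitePlace K // IsComplex w}, ENNReal.ofReal (x w.1)
      ≤ ∫⁻ x in T, ∏ w : {w : InfinitePlace K // IsComplex w}, ENNReal.ofReal (x w.1) :=
        lintegral_mono_set (Set.image_preimage_subset _ _)
    _ ≤ ∫⁻ _ in T, .ofReal R ^ nrComplexPlaces K := by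
        refine setLIntegral_mono measurable_const fun x hx ↦ ?_
        calc ∏ w : {w : InfinitePlace K // IsComplex w}, ENNReal.ofReal (x w.1)
            ≤ ∏ _w : {w : InfinitePlace K // IsComplex w}, ENNReal.ofReal R :=
              Finset.prod_le_prod' fun w _ ↦ ENNReal.ofReal_le_ofReal (hR x hx w)
          _ = .ofReal R ^ nrComplexPlaces K := by simp [nrComplexPlaces]
    _ = .ofReal R ^ nrComplexPlaces K * volume T := setLIntegral_const _ _

open scoped Classical in
theorem isBigO_volume_cthickening_frontier_normLeOne :
    (fun ε ↦ volume.real (cthickening ε (frontier (normLeOne K)))) =O[𝓝[>] 0] fun ε ↦ ε := by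
  obtain ⟨L, hL⟩ := exists_lipschitzOnWith_coneParam K
  set T := coneParam K '' frontier (Set.Icc 0 1)
  have hTc : IsCompact T :=
    (isCompact_Icc.of_isClosed_subset isClosed_frontier
      isClosed_Icc.frontier_subset).image_of_continuousOn
      (hL.continuousOn.mono isClosed_Icc.frontier_subset)
  obtain ⟨R, hR⟩ := isBounded_iff_forall_norm_le.1 (hTc.isBounded.cthickening (δ := 1))
  set D : ℝ≥0∞ := 2 ^ nrRealPlaces K * .ofReal (2 * Real.pi) ^ nrComplexPlaces K *
    .ofReal R ^ nrComplexPlaces K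
  have hD : D ≠ ⊤ := by finiteness
  refine IsBigO.trans (.of_bound D.toReal ?_)
    (isBigO_measureReal_cthickening_image_frontier_unitCube volume
      (finrank_fintype_fun_eq_card ℝ) hL)
  filter_upwards [Ioo_mem_nhdsGT one_pos] with ε ⟨_, hε⟩
  have hfin : volume (cthickening ε T) ≠ ⊤ := hTc.isBounded.cthickening.measure_lt_top.ne
  rw [Real.norm_of_nonneg measureReal_nonneg, Real.norm_of_nonneg measureReal_nonneg,
    measureReal_def, measureReal_def, ← ENNReal.toReal_mul]
  refine ENNReal.toReal_mono (by finiteness) ?_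
  calc volume (cthickening ε (frontier (normLeOne K)))
      ≤ volume (normAtAllPlaces ⁻¹' cthickening ε T : Set (mixedSpace K)) :=
        measure_mono ((cthickening_subset_of_subset ε (frontier_normLeOne_subset K)).trans
          (cthickening_preimage_subset (lipschitzWith_normAtAllPlaces K) ε T))
    _ ≤ D * volume (cthickening ε T) := by
        rw [mul_assoc]
        exact volume_preimage_normAtAllPlaces_le K isClosed_cthickening.measurableSet
          fun x hx w ↦ (le_abs_self _).trans
            ((norm_le_pi_norm x w).trans (hR x (cthickening_mono hε.le T hx)))

end NormLeOne

section LinearCount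

open Asymptotics

theorem isLittleO_rpow_id {β : ℝ} (hβ : β < 1) : (fun s : ℝ ↦ s ^ β) =o[atTop] fun s ↦ s := by
  refine (isLittleO_iff_tendsto' ?_).2 ?_
  · filter_upwards [eventually_ne_atTop 0] with s hs h using absurd h hs
  · refine (tendsto_rpow_neg_atTop (sub_pos.2 hβ)).congr' ?_
    filter_upwards [eventually_gt_atTop 0] with s hs
    rw [neg_sub, Real.rpow_sub_one hs.ne']

theorem isBigO_sub_mul_of_tendsto_div {f g : ℝ → ℝ} {c c' : ℝ}
    (hf : (fun s ↦ f s - c * s) =O[atTop] g) (hg : g =o[atTop] fun s ↦ s)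
    (hlim : Tendsto (fun s ↦ f s / s) atTop (𝓝 c')) :
    (fun s ↦ f s - c' * s) =O[atTop] g := by
  have hc : Tendsto (fun s ↦ (f s - c * s) / s + c) atTop (𝓝 (0 + c)) :=
    ((hf.trans_isLittleO hg).tendsto_div_nhds_zero).add_const c
  have heq : (fun s ↦ (f s - c * s) / s + c) =ᶠ[atTop] fun s ↦ f s / s := by
    filter_upwards [eventually_ne_atTop 0] with s hs
    field_simp
    ring
  rwa [tendsto_nhds_unique hlim (hc.congr' heq), zero_add]

/-- The three summands of the constant dominate the error term for large `y`, for bounded `y ≥ 1`,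
and for `y < 1`. -/
theorem exists_forall_abs_sub_mul_le_rpow {A : ℝ → ℝ} {κ θ : ℝ} (hθ0 : 0 ≤ θ) (hθ1 : θ ≤ 1)
    (hmono : Monotone A) (hzero : ∀ y < 1, A y = 0)
    (hA : (fun y ↦ A y - κ * y) =O[atTop] fun y ↦ y ^ θ) :
    ∃ C, ∀ y, 0 < y → |A y - κ * y| ≤ C * y ^ θ := by
  have hnonneg y : 0 ≤ A y := (hzero (min y 0) (by simp)).ge.trans (hmono (min_le_left _ _))
  obtain ⟨c, hc0, hc⟩ := hA.exists_nonneg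
  obtain ⟨y₀, hy₀, hlarge⟩ :=
    ((eventually_ge_atTop 1).and (eventually_forall_ge_atTop.2 (isBigOWith_iff.1 hc))).exists
  refine ⟨c + (A y₀ + |κ| * y₀) + |κ|, fun y hy ↦ ?_⟩
  have hA0 := hnonneg y₀
  rcases lt_or_ge y 1 with hy1 | hy1
  · rw [hzero y hy1, zero_sub, abs_neg, abs_mul, abs_of_pos hy]
    have hyθ : y ≤ y ^ θ := by simpa using Real.rpow_le_rpow_of_exponent_ge hy hy1.le hθ1
    gcongr
    exact le_add_of_nonneg_left (by positivity)
  rcases le_or_gt y₀ y with hyy | hyy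
  · have := hlarge y hyy
    rw [Real.norm_eq_abs, Real.norm_of_nonneg (by positivity)] at this
    refine this.trans ?_
    gcongr
    rw [add_assoc]
    exact le_add_of_nonneg_right (by positivity)
  · calc |A y - κ * y| ≤ |A y| + |κ * y| := abs_sub _ _
      _ ≤ A y₀ + |κ| * y₀ := by
        rw [abs_of_nonneg (hnonneg y), abs_mul, abs_of_pos hy]
        gcongr
        exact hmono hyy.le
      _ ≤ (c + (A y₀ + |κ| * y₀) + |κ|) * 1 := by linarith [abs_nonneg κ]
      _ ≤ (c + (A y₀ + |κ| * y₀) + |κ|) * y ^ θ := by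
        gcongr
        exact Real.one_le_rpow hy1 hθ0

end LinearCount

section IdealCount

open Module Asymptotics NumberField NumberField.InfinitePlace NumberField.mixedEmbedding
  NumberField.mixedEmbedding.fundamentalCone NumberField.Units
open scoped nonZeroDivisors Pointwise

variable (K : Type*) [Field K] [NumberField K]

/-- The number of nonzero ideals of norm at most `s`. -/
def idealCount (s : ℝ) : ℕ :=
  Nat.card {I : (Ideal (𝓞 K))⁰ // (Ideal.absNorm (I : Ideal (𝓞 K)) : ℝ) ≤ s}

instance finite_absNorm_le (s : ℝ) :
    Finite {I : (Ideal (𝓞 K))⁰ // (Ideal.absNorm (I : Ideal (𝓞 K)) : ℝ) ≤ s} :=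
  ((Ideal.finite_setOfPred_absNorm_le₀ ⌊s⌋₊).subset fun _ hI ↦ Nat.le_floor hI).to_subtype

theorem monotone_idealCount : Monotone (idealCount K) := fun _ s hs ↦
  Nat.card_le_card_of_injective
    (Subtype.map id fun _ hI ↦ hI.trans hs :
      _ → {I : (Ideal (𝓞 K))⁰ // (Ideal.absNorm (I : Ideal (𝓞 K)) : ℝ) ≤ s})
    (Subtype.map_injective _ Function.injective_id)

theorem idealCount_of_lt_one {s : ℝ} (hs : s < 1) : idealCount K s = 0 := by
  refine Nat.card_eq_zero.2 (.inl ⟨fun ⟨I, hI⟩ ↦ ?_⟩)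
  have : (1 : ℝ) ≤ Ideal.absNorm (I : Ideal (𝓞 K)) :=
    Nat.one_le_cast.2 (Ideal.absNorm_pos_of_nonZeroDivisors I)
  linarith

theorem idealCount_eq_sum_card_mk0_eq (s : ℝ) :
    idealCount K s = ∑ C : ClassGroup (𝓞 K),
      Nat.card {I : (Ideal (𝓞 K))⁰ // (Ideal.absNorm (I : Ideal (𝓞 K)) : ℝ) ≤ s ∧
        ClassGroup.mk0 I = C} := by
  rw [idealCount, ← Nat.card_congr (Equiv.sigmaFiberEquiv fun I ↦ ClassGroup.mk0 I.1),
    Nat.card_sigma]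
  exact Finset.sum_congr rfl fun C _ ↦ Nat.card_congr
    (Equiv.subtypeSubtypeEquivSubtypeInter _ fun I ↦ ClassGroup.mk0 I = C)

variable {K} in
/-- Multiplication by `J` makes the ideals in the class inverse to that of `J` principal. -/
theorem card_mk0_eq_inv (J : (Ideal (𝓞 K))⁰) (s : ℝ) :
    Nat.card {I : (Ideal (𝓞 K))⁰ // (Ideal.absNorm (I : Ideal (𝓞 K)) : ℝ) ≤ s ∧
        ClassGroup.mk0 I = (ClassGroup.mk0 J)⁻¹} =
      Nat.card {I : (Ideal (𝓞 K))⁰ // (J : Ideal (𝓞 K)) ∣ I ∧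
        (I : Ideal (𝓞 K)).IsPrincipal ∧ (Ideal.absNorm (I : Ideal (𝓞 K)) : ℝ) ≤
          s * Ideal.absNorm (J : Ideal (𝓞 K))} := by
  have hJ : (0 : ℝ) < Ideal.absNorm (J : Ideal (𝓞 K)) :=
    Nat.cast_pos.2 (Ideal.absNorm_pos_of_nonZeroDivisors J)
  have hmul (I : (Ideal (𝓞 K))⁰) :
      ((J * I : (Ideal (𝓞 K))⁰) : Ideal (𝓞 K)).IsPrincipal ∧
          (Ideal.absNorm ((J * I : (Ideal (𝓞 K))⁰) : Ideal (𝓞 K)) : ℝ) ≤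
            s * Ideal.absNorm (J : Ideal (𝓞 K)) ↔
        (Ideal.absNorm (I : Ideal (𝓞 K)) : ℝ) ≤ s ∧ ClassGroup.mk0 I = (ClassGroup.mk0 J)⁻¹ := by
    rw [← ClassGroup.mk0_eq_one_iff (SetLike.coe_mem _), SetLike.eta, map_mul,
      mul_eq_one_iff_eq_inv', Submonoid.coe_mul, map_mul, Nat.cast_mul, mul_comm s,
      mul_le_mul_iff_right₀ hJ, and_comm]
  refine Nat.card_eq_of_bijective
    (Subtype.map (J * ·) fun I hI ↦ ⟨dvd_mul_right _ _, (hmul I).2 hI⟩)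
    ⟨Subtype.map_injective _ (mul_right_injective J), fun ⟨I, ⟨I', hI'⟩, hI⟩ ↦ ?_⟩
  have hI'0 : I' ∈ (Ideal (𝓞 K))⁰ := mem_nonZeroDivisors_of_ne_zero fun h ↦
    nonZeroDivisors.coe_ne_zero I (by rw [hI', h, mul_zero])
  obtain rfl : I = J * ⟨I', hI'0⟩ := Subtype.ext hI'
  exact ⟨⟨⟨I', hI'0⟩, (hmul _).1 hI⟩, rfl⟩

variable {K} in
theorem ncard_smul_normLeOne_inter_span (J : (Ideal (𝓞 K))⁰) {t : ℝ} (ht : 0 < t) :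
    (t • normLeOne K ∩ Submodule.span ℤ
        (Set.range (fractionalIdealLatticeBasis K (FractionalIdeal.mk0 K J)))).ncard =
      Nat.card {a : idealSet K J // mixedEmbedding.norm (a : mixedSpace K) ≤ t ^ finrank ℚ K} := by
  have himage : t • normLeOne K ∩ Submodule.span ℤ
      (Set.range (fractionalIdealLatticeBasis K (FractionalIdeal.mk0 K J))) =
      Subtype.val '' {a : idealSet K J | mixedEmbedding.norm (a : mixedSpace K) ≤
        t ^ finrank ℚ K} := by
    ext x
    have hcone : x ∈ t • normLeOne K ↔
        x ∈ fundamentalCone K ∧ mixedEmbedding.norm x ≤ t ^ finrank ℚ K := by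
      rw [Set.mem_smul_set_iff_inv_smul_mem₀ ht.ne', mem_normLeOne,
        smul_mem_iff_mem (inv_ne_zero ht.ne'), mixedEmbedding.norm_smul,
        abs_of_pos (inv_pos.2 ht), inv_pow, inv_mul_le_iff₀ (by positivity), mul_one]
    rw [Set.mem_inter_iff, hcone, span_idealLatticeBasis, Subtype.coe_image, idealSet]
    simp only [Set.mem_inter_iff, Set.mem_ofPred_eq, SetLike.mem_coe]
    tauto
  rw [himage, Set.ncard_image_of_injective _ Subtype.val_injective, ← Nat.card_coe_set_eq]
  rfl

variable {K} in
theorem exists_isBigO_card_isPrincipal_dvd (J : (Ideal (𝓞 K))⁰) :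
    ∃ c : ℝ, (fun s : ℝ ↦ (Nat.card {I : (Ideal (𝓞 K))⁰ // (J : Ideal (𝓞 K)) ∣ I ∧
        (I : Ideal (𝓞 K)).IsPrincipal ∧ (Ideal.absNorm (I : Ideal (𝓞 K)) : ℝ) ≤ s} : ℝ) -
          c * s) =O[atTop] fun s : ℝ ↦ s ^ (1 - 1 / (finrank ℚ K : ℝ)) := by
  classical
  set n := finrank ℚ K
  have hn : 0 < n := finrank_pos
  have hw : (0 : ℝ) < torsionOrder K := Nat.cast_pos.2 (torsionOrder_pos K)
  have : Nontrivial (mixedSpace K) :=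
    nontrivial_of_finrank_pos (R := ℝ) (by rwa [mixedEmbedding.finrank])
  set b := fractionalIdealLatticeBasis K (FractionalIdeal.mk0 K J)
  have hlattice := isBigO_ncard_lattice_smul MeasureTheory.volume b (isBounded_normLeOne K)
    (measurableSet_normLeOne K) (isBigO_volume_cthickening_frontier_normLeOne K)
  rw [mixedEmbedding.finrank] at hlattice
  set F := MeasureTheory.volume.real (ZSpan.fundamentalDomain b)
  have hF : 0 < F :=
    ENNReal.toReal_pos (ZSpan.measure_fundamentalDomain_ne_zero b)
      (ZSpan.fundamentalDomain_isBounded b).measure_lt_top.ne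
  have htend : Tendsto (fun s : ℝ ↦ s ^ (1 / (n : ℝ))) atTop atTop :=
    tendsto_rpow_atTop (by positivity)
  refine ⟨MeasureTheory.volume.real (normLeOne K) / (torsionOrder K * F), ?_⟩
  refine ((hlattice.comp_tendsto htend).const_mul_left (torsionOrder K * F)⁻¹).congr' ?_ ?_ <;>
    filter_upwards [eventually_gt_atTop 0] with s hs
  · have hpow : (s ^ (1 / (n : ℝ))) ^ n = s := by
      rw [one_div, Real.rpow_inv_natCast_pow hs.le hn.ne']
    rw [Function.comp_apply, ncard_smul_normLeOne_inter_span J (by positivity), hpow,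
      ← card_isPrincipal_dvd_norm_le, Nat.cast_mul]
    field_simp
  · rw [Function.comp_apply, ← Real.rpow_natCast, ← Real.rpow_mul hs.le, Nat.cast_sub hn,
      Nat.cast_one, show 1 / (n : ℝ) * (n - 1) = 1 - 1 / n by field_simp]

theorem exists_isBigO_card_mk0_eq (C : ClassGroup (𝓞 K)) :
    ∃ c : ℝ, (fun s : ℝ ↦ (Nat.card {I : (Ideal (𝓞 K))⁰ //
        (Ideal.absNorm (I : Ideal (𝓞 K)) : ℝ) ≤ s ∧ ClassGroup.mk0 I = C} : ℝ) - c * s) =O[atTop]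
      fun s : ℝ ↦ s ^ (1 - 1 / (finrank ℚ K : ℝ)) := by
  obtain ⟨J, hJ⟩ := ClassGroup.mk0_surjective C⁻¹
  obtain rfl : C = (ClassGroup.mk0 J)⁻¹ := by rw [hJ, inv_inv]
  set m : ℝ := (Ideal.absNorm (J : Ideal (𝓞 K)) : ℝ)
  have hm : 0 < m := Nat.cast_pos.2 (Ideal.absNorm_pos_of_nonZeroDivisors J)
  obtain ⟨c, hc⟩ := exists_isBigO_card_isPrincipal_dvd J
  refine ⟨c * m, ?_⟩
  refine ((hc.comp_tendsto (tendsto_id.atTop_mul_const hm)).congr_left fun s ↦ ?_).trans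
    (.of_bound (m ^ (1 - 1 / (finrank ℚ K : ℝ))) ?_)
  · rw [Function.comp_apply, id, card_mk0_eq_inv, mul_right_comm, mul_assoc]
  · filter_upwards [eventually_gt_atTop 0] with s hs
    rw [Function.comp_apply, id, Real.mul_rpow hs.le hm.le, norm_mul, mul_comm,
      Real.norm_of_nonneg (Real.rpow_nonneg hm.le _)]

theorem isBigO_idealCount_sub :
    (fun s : ℝ ↦ (idealCount K s : ℝ) -
        (2 ^ nrRealPlaces K * (2 * Real.pi) ^ nrComplexPlaces K * regulator K * classNumber K) /
          (torsionOrder K * √|discr K|) * s) =O[atTop]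
      fun s : ℝ ↦ s ^ (1 - 1 / (finrank ℚ K : ℝ)) := by
  have hn : (0 : ℝ) < finrank ℚ K := Nat.cast_pos.2 finrank_pos
  choose c hc using exists_isBigO_card_mk0_eq K
  refine isBigO_sub_mul_of_tendsto_div (c := ∑ C, c C) ?_
    (isLittleO_rpow_id (sub_lt_self 1 (by positivity)))
    (NumberField.Ideal.tendsto_norm_le_div_atTop₀ K)
  refine (IsBigO.sum (s := Finset.univ) fun C _ ↦ hc C).congr_left fun s ↦ ?_
  rw [idealCount_eq_sum_card_mk0_eq, Finset.sum_apply, Finset.sum_sub_distrib, ← Finset.sum_mul,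
    Nat.cast_sum]

end IdealCount

section ExponentVectors

variable {P M N : Type*} [CommMonoid M] [CommMonoid N]

/-- The element `∏ p, q p ^ f p` with exponent vector `f`. For `q p = N(p)` it is the norm of the
ideal with exponent vector `f`, and for `q p = p` it is that ideal itself. -/
def powProd (q : P → M) (f : P →₀ ℕ) : M := f.prod fun p k ↦ q p ^ k

theorem powProd_add (q : P → M) (f g : P →₀ ℕ) :
    powProd q (f + g) = powProd q f * powProd q g :=
  Finsupp.prod_add_index' (fun _ ↦ pow_zero _) fun _ _ _ ↦ pow_add _ _ _

theorem powProd_nsmul (q : P → M) (n : ℕ) (f : P →₀ ℕ) : powProd q (n • f) = powProd q f ^ n := by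
  induction n with
  | zero => simp [powProd]
  | succ n ih => rw [succ_nsmul, powProd_add, ih, pow_succ]

theorem powProd_single (q : P → M) (p : P) (k : ℕ) : powProd q (Finsupp.single p k) = q p ^ k :=
  Finsupp.prod_single_index (pow_zero _)

theorem map_powProd (φ : M →* N) (q : P → M) (f : P →₀ ℕ) :
    φ (powProd q f) = powProd (fun p ↦ φ (q p)) f := by
  simp [powProd, map_finsuppProd]

theorem powProd_pos {q : P → ℕ} (hq : ∀ p, 0 < q p) (f : P →₀ ℕ) : 0 < powProd q f :=
  Finset.prod_pos fun p _ ↦ pow_pos (hq p) _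

theorem powProd_rpow (q : P → ℕ) (s : ℝ) (f : P →₀ ℕ) :
    powProd (fun p ↦ (q p : ℝ) ^ s) f = ((powProd q f : ℕ) : ℝ) ^ s := by
  rw [powProd, powProd, Finsupp.prod, Finsupp.prod, Nat.cast_prod,
    ← Real.finsetProd_rpow _ _ fun p _ ↦ by positivity]
  refine Finset.prod_congr rfl fun p _ ↦ ?_
  rw [Nat.cast_pow, Real.rpow_pow_comm (Nat.cast_nonneg _)]

end ExponentVectors

section EulerProduct

variable {P : Type*} {E : P → Finset ℕ} {T : Finset P} {w : P → ℝ}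

theorem sum_finsupp_powProd (E : P → Finset ℕ) (w : P → ℝ) (U : Finset P) :
    ∑ b ∈ U.finsupp E, powProd w b = ∏ p ∈ U, ∑ e ∈ E p, w p ^ e := by
  classical
  rw [Finset.finsupp, Finset.sum_map, Finset.prod_sum]
  refine Finset.sum_congr rfl fun f _ ↦ ?_
  change (Finsupp.indicator U f).prod _ = _
  rw [Finsupp.prod_of_support_subset _ (Finsupp.support_indicator_subset _ _) _
    fun _ _ ↦ pow_zero _, ← Finset.prod_attach]
  exact Finset.prod_congr rfl fun p _ ↦ by simp

theorem coe_finsupp_subset (hE : ∀ p ∉ T, 0 ∈ E p) {U : Finset P} (hTU : T ⊆ U) :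
    (U.finsupp E : Set (P →₀ ℕ)) ⊆ {b | ∀ p, b p ∈ E p} := by
  intro b hb p
  obtain ⟨hsupp, hmem⟩ := Finset.mem_finsupp_iff.1 hb
  by_cases hp : p ∈ U
  · exact hmem p hp
  · rw [Finsupp.notMem_support_iff.1 fun h ↦ hp (hsupp h)]
    exact hE p fun h ↦ hp (hTU h)

theorem prod_sum_pow_le_of_hasProd (hw : ∀ p, 0 ≤ w p) (hE : ∀ p ∉ T, 0 ∈ E p) {Z : ℝ}
    (hZ : HasProd (fun p ↦ ∑ e ∈ E p, w p ^ e) Z) {U : Finset P} (hTU : T ⊆ U) :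
    ∏ p ∈ U, ∑ e ∈ E p, w p ^ e ≤ Z := by
  refine ge_of_tendsto hZ <| (eventually_ge_atTop U).mono fun V hUV ↦
    Finset.prod_le_prod_of_subset_of_one_le hUV
      (fun p _ ↦ Finset.sum_nonneg fun e _ ↦ pow_nonneg (hw p) e) fun p _ hp ↦ ?_
  rw [← pow_zero (w p)]
  exact Finset.single_le_sum (f := fun e ↦ w p ^ e) (fun e _ ↦ pow_nonneg (hw p) e)
    (hE p fun h ↦ hp (hTU h))

theorem hasSum_powProd_of_hasProd (hw : ∀ p, 0 ≤ w p) (hE : ∀ p ∉ T, 0 ∈ E p) {Z : ℝ}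
    (hZ : HasProd (fun p ↦ ∑ e ∈ E p, w p ^ e) Z) :
    HasSum (fun b : {b : P →₀ ℕ | ∀ p, b p ∈ E p} ↦ powProd w b) Z := by
  classical
  set A : Set (P →₀ ℕ) := {b | ∀ p, b p ∈ E p}
  have hpos (b : P →₀ ℕ) : 0 ≤ powProd w b := Finset.prod_nonneg fun p _ ↦ pow_nonneg (hw p) _
  have hbox {U : Finset P} (hTU : T ⊆ U) :
      ∑ b ∈ U.finsupp E, A.indicator (powProd w) b = ∏ p ∈ U, ∑ e ∈ E p, w p ^ e := by
    rw [← sum_finsupp_powProd E w U]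
    exact Finset.sum_congr rfl fun b hb ↦ Set.indicator_of_mem (coe_finsupp_subset hE hTU hb) _
  refine (hasSum_subtype_iff_indicator (f := powProd w)).2 <|
    hasSum_of_isLUB_of_nonneg _ (Set.indicator_nonneg fun b _ ↦ hpos b) ⟨?_, fun c hc ↦ ?_⟩
  · rintro _ ⟨V, rfl⟩
    set U := T ∪ V.biUnion Finsupp.support
    have hTU : T ⊆ U := Finset.subset_union_left
    refine le_trans ?_ ((hbox hTU).trans_le (prod_sum_pow_le_of_hasProd hw hE hZ hTU))
    beta_reduce
    rw [← Finset.sum_filter_ne_zero V]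
    refine Finset.sum_le_sum_of_subset_of_nonneg (fun b hb ↦ ?_) fun b _ _ ↦
      Set.indicator_nonneg (fun b _ ↦ hpos b) b
    obtain ⟨hbV, hb⟩ := Finset.mem_filter.1 hb
    exact Finset.mem_finsupp_iff.2
      ⟨(Finset.subset_biUnion_of_mem _ hbV).trans Finset.subset_union_right,
        fun p _ ↦ Set.mem_of_indicator_ne_zero hb p⟩
  · exact le_of_tendsto hZ <| (eventually_ge_atTop T).mono fun U hTU ↦
      (hbox hTU).symm.trans_le (hc ⟨_, rfl⟩)

end EulerProduct

section SummableRpow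

theorem hasSum_natCard_sigma {ι : Type*} (X : ι → Type*) [Finite (Σ i, X i)] :
    HasSum (fun i ↦ (Nat.card (X i) : ℝ)) (Nat.card (Σ i, X i) : ℝ) := by
  have hfin (i : ι) : Finite (X i) := Finite.of_injective (Sigma.mk i) sigma_mk_injective
  have := Fintype.ofFinite (Σ i, X i)
  refine HasSum.sigma (f := fun _ : Σ i, X i ↦ (1 : ℝ)) ?_ fun i ↦ ?_
  · simpa [Nat.card_eq_fintype_card] using hasSum_fintype fun _ : Σ i, X i ↦ (1 : ℝ)
  · have := Fintype.ofFinite (X i)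
    simpa [Nat.card_eq_fintype_card] using hasSum_fintype fun _ : X i ↦ (1 : ℝ)

variable {X : Type*}

theorem sum_card_fiber_le (ν : X → ℕ) {n : ℕ} (hfin : Finite {x // ν x ≤ n}) :
    ∑ k ∈ Finset.Icc 1 n, Nat.card {x // ν x = k} ≤ Nat.card {x // ν x ≤ n} := by
  classical
  have hfin : {x | ν x ≤ n}.Finite := hfin
  calc ∑ k ∈ Finset.Icc 1 n, Nat.card {x // ν x = k}
      = ∑ k ∈ Finset.Icc 1 n, (hfin.toFinset.filter (ν · = k)).card := by
        refine Finset.sum_congr rfl fun k hk ↦ Nat.subtype_card _ fun x ↦ ?_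
        have := (Finset.mem_Icc.1 hk).2
        simp only [Finset.mem_filter, Set.Finite.mem_toFinset, Set.mem_ofPred_eq]
        lia
    _ = (hfin.toFinset.filter (ν · ∈ Finset.Icc 1 n)).card :=
        Finset.sum_card_fiberwise_eq_card_filter _ _ ν
    _ ≤ hfin.toFinset.card := Finset.card_filter_le _ _
    _ = Nat.card {x // ν x ≤ n} := (Nat.subtype_card _ fun x ↦ hfin.mem_toFinset).symm

theorem summable_comp_of_summable_card_mul {ν : X → ℕ} (hfin : ∀ n, Finite {x // ν x = n})
    {g : ℕ → ℝ} (hg : ∀ n, 0 ≤ g n) (hs : Summable fun n ↦ (Nat.card {x // ν x = n} : ℝ) * g n) :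
    Summable fun x ↦ g (ν x) := by
  have hfin (n : ℕ) : Fintype {x // ν x = n} := Fintype.ofFinite _
  have hconst (z : Σ n, {x // ν x = n}) : g z.1 = g (ν z.2.1) := by rw [z.2.2]
  refine (Equiv.sigmaFiberEquiv ν).summable_iff.1 <| Summable.congr (f := fun z ↦ g z.1) ?_ hconst
  refine (summable_sigma_of_nonneg fun z ↦ hg z.1).2 ⟨fun n ↦ (hasSum_fintype _).summable, ?_⟩
  simpa [Nat.card_eq_fintype_card] using hs

theorem summable_rpow_neg_of_isBigO_card {ν : X → ℕ} (hfin : ∀ n, Finite {x // ν x ≤ n}) {r σ : ℝ}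
    (hr : 0 ≤ r) (hσ : r < σ)
    (hO : (fun n : ℕ ↦ (Nat.card {x // ν x ≤ n} : ℝ)) =O[atTop] fun n : ℕ ↦ (n : ℝ) ^ r) :
    Summable fun x ↦ (ν x : ℝ) ^ (-σ) := by
  have hL : LSeriesSummable (fun n ↦ ((Nat.card {x // ν x = n} : ℝ) : ℂ)) (σ : ℂ) := by
    refine LSeriesSummable_of_sum_norm_bigO_and_nonneg (.trans ?_ hO) (fun n ↦ by positivity) hr
      (by simpa using hσ)
    refine .of_bound 1 (.of_forall fun n ↦ ?_)
    rw [one_mul, Real.norm_natCast, Real.norm_of_nonneg (by positivity)]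
    exact_mod_cast sum_card_fiber_le ν (hfin n)
  refine summable_comp_of_summable_card_mul (g := fun n ↦ (n : ℝ) ^ (-σ))
    (fun n ↦ Set.Finite.subset (hfin n) fun x hx ↦ hx.le) (fun n ↦ by positivity)
    (hL.norm.congr fun n ↦ ?_)
  rcases eq_or_ne n 0 with rfl | hn
  · simp [Real.zero_rpow (neg_ne_zero.2 (hr.trans_lt hσ).ne')]
  · simp [hn, Real.rpow_neg, div_eq_mul_inv]

end SummableRpow

section FullVectors

variable {P : Type*} {h : ℕ} {S : Finset P} {q : P → ℕ}

/-- Exponent vectors of the `h`-full elements divisible by every prime in `S`. -/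
def fullVectors (h : ℕ) (S : Finset P) : Set (P →₀ ℕ) :=
  {f | (∀ p, f p ≠ 0 → h ≤ f p) ∧ ∀ p ∈ S, f p ≠ 0}

open scoped Classical in
/-- A system of representatives modulo `h` for the exponents of `p` occurring in `fullVectors h S`,
consisting of the least such exponent in each residue class. -/
def residualExponents (h : ℕ) (S : Finset P) (p : P) : Finset ℕ :=
  if p ∈ S then Finset.Ico h (2 * h) else insert 0 (Finset.Ico (h + 1) (2 * h))

/-- Exponent vectors of the cofactors `b` in the factorization `f = a ^ h * b` of `h`-full elements
divisible by every prime in `S`, where `a` is arbitrary. -/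
def residualVectors (h : ℕ) (S : Finset P) : Set (P →₀ ℕ) :=
  {b | ∀ p, b p ∈ residualExponents h S p}

theorem zero_mem_residualExponents {p : P} (hp : p ∉ S) : 0 ∈ residualExponents h S p := by
  simp [residualExponents, hp]

theorem injOn_mod_residualExponents (p : P) :
    Set.InjOn (· % h) (residualExponents h S p : Set ℕ) := by
  have hIco {e : ℕ} (he : h ≤ e ∧ e < 2 * h) : e % h + h = e := by
    rw [Nat.mod_eq_sub_mod he.1, Nat.mod_eq_of_lt (by lia), Nat.sub_add_cancel he.1]
  intro e he e' he' hmod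
  have hmod : e % h = e' % h := hmod
  simp only [residualExponents, Finset.mem_coe] at he he'
  split_ifs at he he'
  · rw [← hIco (Finset.mem_Ico.1 he), ← hIco (Finset.mem_Ico.1 he'), hmod]
  · simp only [Finset.mem_insert, Finset.mem_Ico] at he he'
    rcases he with rfl | he <;> rcases he' with rfl | he'
    · rfl
    · have := hIco ⟨by lia, he'.2⟩
      rw [Nat.zero_mod] at hmod
      lia
    · have := hIco ⟨by lia, he.2⟩
      rw [Nat.zero_mod] at hmod
      lia
    · rw [← hIco ⟨by lia, he.2⟩, ← hIco ⟨by lia, he'.2⟩, hmod]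

theorem exists_mul_add_mem_residualExponents (hh : h ≠ 0) {p : P} {k : ℕ} (hk : k ≠ 0 → h ≤ k)
    (hpk : p ∈ S → k ≠ 0) : ∃ a, ∃ e ∈ residualExponents h S p, h * a + e = k := by
  have hlt := Nat.mod_lt k hh.pos
  have hdiv := Nat.div_add_mod k h
  by_cases hred : p ∉ S ∧ k % h = 0
  · exact ⟨k / h, 0, zero_mem_residualExponents hred.1, by lia⟩
  · have hhk : h ≤ k := hk <| by
      rintro rfl
      exact hred ⟨fun hp ↦ hpk hp rfl, Nat.zero_mod h⟩
    refine ⟨k / h - 1, h + k % h, ?_, ?_⟩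
    · rw [residualExponents]
      split_ifs with hp <;> simp only [Finset.mem_insert, Finset.mem_Ico]
      · lia
      · have : k % h ≠ 0 := fun h0 ↦ hred ⟨hp, h0⟩
        lia
    · rw [← add_assoc, ← Nat.mul_succ, Nat.succ_eq_add_one,
        Nat.sub_add_cancel (Nat.div_pos hhk hh.pos), hdiv]

theorem bijOn_nsmul_add_residualVectors (hh : h ≠ 0) (S : Finset P) :
    Set.BijOn (fun z : (P →₀ ℕ) × (P →₀ ℕ) ↦ h • z.1 + z.2) (Set.univ ×ˢ residualVectors h S)
      (fullVectors h S) := by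
  refine ⟨?_, ?_, ?_⟩
  · rintro ⟨a, b⟩ ⟨-, hb⟩
    refine ⟨fun p ↦ ?_, fun p hp ↦ ?_⟩ <;> have hbp := hb p <;>
      simp only [Finsupp.add_apply, Finsupp.smul_apply, smul_eq_mul]
    · rcases Nat.eq_zero_or_pos (a p) with ha | ha
      · rw [ha]
        simp only [residualExponents] at hbp
        split_ifs at hbp <;> simp only [Finset.mem_insert, Finset.mem_Ico] at hbp <;> lia
      · have := Nat.le_mul_of_pos_right h ha
        lia
    · simp only [residualExponents, if_pos hp, Finset.mem_Ico] at hbp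
      lia
  · rintro ⟨a, b⟩ ⟨-, hb⟩ ⟨a', b'⟩ ⟨-, hb'⟩ H
    have happ (p : P) : h * a p + b p = h * a' p + b' p := DFunLike.congr_fun H p
    have hbb' : b = b' := Finsupp.ext fun p ↦ injOn_mod_residualExponents p (hb p) (hb' p) <| by
      simpa [Nat.mul_add_mod] using congrArg (· % h) (happ p)
    subst hbb'
    exact Prod.ext (Finsupp.ext fun p ↦ Nat.eq_of_mul_eq_mul_left hh.pos
      (Nat.add_right_cancel (happ p))) rfl
  · rintro f ⟨hfull, hS⟩
    choose a e he hf using fun p ↦ exists_mul_add_mem_residualExponents hh (hfull p) (hS p)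
    refine ⟨⟨.onFinset f.support a fun p hp ↦ ?_, .onFinset f.support e fun p hp ↦ ?_⟩,
      ⟨trivial, he⟩, Finsupp.ext hf⟩
    · rw [Finsupp.mem_support_iff, ← hf p]
      exact (Nat.add_pos_left (Nat.mul_pos hh.pos (Nat.pos_of_ne_zero hp)) _).ne'
    · rw [Finsupp.mem_support_iff, ← hf p]
      exact (Nat.add_pos_right _ (Nat.pos_of_ne_zero hp)).ne'

theorem powProd_nsmul_add_le_iff (hq : ∀ p, 0 < q p) (hh : h ≠ 0) {x : ℝ} (hx : 0 ≤ x)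
    (a b : P →₀ ℕ) :
    ((powProd q (h • a + b) : ℕ) : ℝ) ≤ x ↔
      ((powProd q a : ℕ) : ℝ) ≤ (x / (powProd q b : ℕ)) ^ (1 / (h : ℝ)) := by
  have hb : (0 : ℝ) < (powProd q b : ℕ) := Nat.cast_pos.2 (powProd_pos hq b)
  rw [one_div, Real.le_rpow_inv_iff_of_pos (Nat.cast_nonneg _) (by positivity)
    (Nat.cast_pos.2 hh.pos), Real.rpow_natCast, le_div_iff₀ hb, powProd_add, powProd_nsmul]
  push_cast
  rfl

theorem hasSum_card_fullVectors (hq : ∀ p, 0 < q p) (hh : h ≠ 0) {x : ℝ} (hx : 0 ≤ x)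
    (hfin : Finite {f : P →₀ ℕ // ((powProd q f : ℕ) : ℝ) ≤ x}) (S : Finset P) :
    HasSum (fun b : residualVectors h S ↦ (Nat.card {a : P →₀ ℕ //
        ((powProd q a : ℕ) : ℝ) ≤ (x / (powProd q b.1 : ℕ)) ^ (1 / (h : ℝ))} : ℝ))
      (Nat.card {f : P →₀ ℕ // f ∈ fullVectors h S ∧ ((powProd q f : ℕ) : ℝ) ≤ x} : ℝ) := by
  obtain ⟨hmaps, hinj, hsurj⟩ := bijOn_nsmul_add_residualVectors hh S
  let φ (z : Σ b : residualVectors h S, {a : P →₀ ℕ //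
      ((powProd q a : ℕ) : ℝ) ≤ (x / (powProd q b.1 : ℕ)) ^ (1 / (h : ℝ))}) :
      {f : P →₀ ℕ // f ∈ fullVectors h S ∧ ((powProd q f : ℕ) : ℝ) ≤ x} :=
    ⟨h • z.2.1 + z.1.1, hmaps (x := (z.2.1, z.1.1)) ⟨trivial, z.1.2⟩,
      (powProd_nsmul_add_le_iff hq hh hx _ _).2 z.2.2⟩
  have hφ : Function.Bijective φ := by
    refine ⟨?_, ?_⟩
    · rintro ⟨b, a, ha⟩ ⟨b', a', ha'⟩ H
      have hab : (a, b.1) = (a', b'.1) :=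
        hinj ⟨trivial, b.2⟩ ⟨trivial, b'.2⟩ (congrArg Subtype.val H)
      obtain ⟨rfl, hb⟩ := Prod.mk.inj hab
      obtain rfl := Subtype.ext hb
      rfl
    · rintro ⟨f, hf, hfx⟩
      obtain ⟨⟨a, b⟩, ⟨-, hb⟩, rfl⟩ := hsurj hf
      exact ⟨⟨⟨b, hb⟩, a, (powProd_nsmul_add_le_iff hq hh hx _ _).1 hfx⟩, rfl⟩
  have : Finite {f : P →₀ ℕ // f ∈ fullVectors h S ∧ ((powProd q f : ℕ) : ℝ) ≤ x} :=
    Set.Finite.subset hfin fun f hf ↦ hf.2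
  have := Finite.of_injective φ hφ.1
  rw [← Nat.card_congr (Equiv.ofBijective φ hφ)]
  exact hasSum_natCard_sigma _

end FullVectors

section EulerFactors

variable {P : Type*} {h : ℕ} {w : ℝ}

/-- The Euler factor at a prime outside `S` of the Dirichlet series of the cofactors in
`residualVectors h S`; here `w = N(p) ^ (-s)`. -/
def cofactorEulerFactor (h : ℕ) (w : ℝ) : ℝ := 1 + ∑ e ∈ Finset.Ico (h + 1) (2 * h), w ^ e

/-- The proportion of the `h`-full elements divisible by a given prime, as the quotient of the Euler
factors at that prime when it is inside and outside `S`. -/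
def divisibilityDensity (h : ℕ) (w : ℝ) : ℝ := w ^ h / (1 - w + w ^ h)

theorem one_le_cofactorEulerFactor (hw : 0 ≤ w) : 1 ≤ cofactorEulerFactor h w :=
  le_add_of_nonneg_right <| Finset.sum_nonneg fun e _ ↦ pow_nonneg hw e

theorem cofactorEulerFactor_sub_one_le (hw : 0 ≤ w) (hw1 : w ≤ 1) :
    cofactorEulerFactor h w - 1 ≤ h * w ^ (h + 1) := by
  calc cofactorEulerFactor h w - 1 = ∑ e ∈ Finset.Ico (h + 1) (2 * h), w ^ e :=
        add_sub_cancel_left _ _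
    _ ≤ ∑ _e ∈ Finset.Ico (h + 1) (2 * h), w ^ (h + 1) := Finset.sum_le_sum fun e he ↦
        pow_le_pow_of_le_one hw hw1 (Finset.mem_Ico.1 he).1
    _ ≤ h * w ^ (h + 1) := by
        rw [Finset.sum_const, Nat.card_Ico, nsmul_eq_mul]
        gcongr
        lia

theorem cofactorEulerFactor_inv (hh : h ≠ 0) {v : ℝ} (hv : 1 < v) :
    cofactorEulerFactor h v⁻¹ = 1 + (v ^ h - v) / ((v ^ h) ^ 2 * (v - 1)) := by
  have hv0 : v ≠ 0 := by positivity
  have : v - 1 ≠ 0 := sub_ne_zero.2 hv.ne'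
  have hw1 : v⁻¹ ≠ 1 := inv_ne_one.2 hv.ne'
  rw [cofactorEulerFactor, geom_sum_Ico hw1 (by lia), add_right_inj,
    div_eq_div_iff (sub_ne_zero.2 hw1) (by positivity), pow_succ, two_mul, pow_add]
  simp only [inv_pow]
  field_simp
  ring

theorem one_le_mul_one_sub_add_pow (hh : h ≠ 0) (hw : 0 ≤ w) :
    1 ≤ h * (1 - w + w ^ h) := by
  have bernoulli := one_add_mul_le_pow (a := w - 1) (by linarith) h
  rw [add_sub_cancel] at bernoulli
  have : (1 : ℝ) ≤ h := Nat.one_le_cast.2 (Nat.one_le_iff_ne_zero.2 hh)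
  nlinarith [pow_nonneg hw h]

theorem one_sub_add_pow_pos (hh : h ≠ 0) (hw : 0 ≤ w) : 0 < 1 - w + w ^ h :=
  pos_of_mul_pos_right (zero_lt_one.trans_le (one_le_mul_one_sub_add_pow hh hw)) h.cast_nonneg

theorem divisibilityDensity_nonneg (hh : h ≠ 0) (hw : 0 ≤ w) : 0 ≤ divisibilityDensity h w :=
  div_nonneg (pow_nonneg hw h) (one_sub_add_pow_pos hh hw).le

theorem divisibilityDensity_le (hh : h ≠ 0) (hw : 0 ≤ w) : divisibilityDensity h w ≤ h * w ^ h := by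
  rw [divisibilityDensity, div_le_iff₀ (one_sub_add_pow_pos hh hw), mul_right_comm]
  exact le_mul_of_one_le_left (pow_nonneg hw h) (one_le_mul_one_sub_add_pow hh hw)

open scoped Classical in
theorem sum_residualExponents_pow (hh : h ≠ 0) (hw : 0 ≤ w) (S : Finset P) (p : P) :
    ∑ e ∈ residualExponents h S p, w ^ e =
      (if p ∈ S then divisibilityDensity h w else 1) * cofactorEulerFactor h w := by
  rw [residualExponents, cofactorEulerFactor, divisibilityDensity]
  split_ifs
  · have hgeom := geom_sum_Ico_mul w (m := h) (n := 2 * h) (by lia)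
    have hbot := Finset.sum_eq_sum_Ico_succ_bot (a := h) (b := 2 * h) (by lia) fun e ↦ w ^ e
    rw [two_mul, pow_add] at hgeom
    rw [two_mul] at hbot ⊢
    rw [div_mul_eq_mul_div, eq_div_iff (one_sub_add_pow_pos hh hw).ne']
    linear_combination -hgeom + w ^ h * hbot
  · rw [Finset.sum_insert (by simp), pow_zero, one_mul]

end EulerFactors

section CofactorSeries

variable {P : Type*} {h : ℕ}

theorem hasProd_sum_residualExponents (hh : h ≠ 0) {w : P → ℝ} (hw : ∀ p, 0 ≤ w p)
    (hw1 : ∀ p, w p ≤ 1) (hs : Summable fun p ↦ w p ^ (h + 1)) (S : Finset P) :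
    HasProd (fun p ↦ ∑ e ∈ residualExponents h S p, w p ^ e)
      ((∏ p ∈ S, divisibilityDensity h (w p)) * ∏' p, cofactorEulerFactor h (w p)) := by
  classical
  have hmul : Multipliable fun p ↦ cofactorEulerFactor h (w p) := by
    simpa only [add_sub_cancel] using Real.multipliable_one_add_of_summable <|
      (hs.mul_left (h : ℝ)).of_nonneg_of_le
        (fun p ↦ sub_nonneg.2 (one_le_cofactorEulerFactor (hw p)))
        fun p ↦ cofactorEulerFactor_sub_one_le (hw p) (hw1 p)
  have hdens : HasProd (fun p ↦ if p ∈ S then divisibilityDensity h (w p) else 1)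
      (∏ p ∈ S, divisibilityDensity h (w p)) := by
    rw [← Finset.prod_congr rfl fun p hp ↦ if_pos hp]
    exact hasProd_prod_of_ne_finset_one fun p hp ↦ if_neg hp
  simp only [sum_residualExponents_pow hh (hw _)]
  exact hdens.mul hmul.hasProd

theorem hasSum_residualVectors_rpow_neg (hh : h ≠ 0) {q : P → ℕ} {s : ℝ} (hs : 0 ≤ s)
    (hsum : Summable fun p ↦ (q p : ℝ) ^ (-(s * (h + 1)))) (S : Finset P) :
    HasSum (fun b : residualVectors h S ↦ ((powProd q b.1 : ℕ) : ℝ) ^ (-s))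
      ((∏ p ∈ S, divisibilityDensity h ((q p : ℝ) ^ (-s))) *
        ∏' p, cofactorEulerFactor h ((q p : ℝ) ^ (-s))) := by
  have hw (p : P) : 0 ≤ (q p : ℝ) ^ (-s) := by positivity
  have hw1 (p : P) : (q p : ℝ) ^ (-s) ≤ 1 := by
    rcases (q p).eq_zero_or_pos with hp | hp
    · rw [hp, Nat.cast_zero]
      exact Real.zero_rpow_le_one _
    · exact Real.rpow_le_one_of_one_le_of_nonpos (Nat.one_le_cast.2 hp) (neg_nonpos.2 hs)
  have hpow : Summable fun p ↦ ((q p : ℝ) ^ (-s)) ^ (h + 1) := hsum.congr fun p ↦ by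
    rw [← Real.rpow_mul_natCast (Nat.cast_nonneg _), Nat.cast_succ, neg_mul]
  simpa only [powProd_rpow, residualVectors] using hasSum_powProd_of_hasProd hw
    (fun _ ↦ zero_mem_residualExponents) (hasProd_sum_residualExponents hh hw hw1 hpow S)

theorem prod_divisibilityDensity_le (hh : h ≠ 0) {w : P → ℝ} (hw : ∀ p, 0 ≤ w p) (S : Finset P) :
    ∏ p ∈ S, divisibilityDensity h (w p) ≤ h ^ S.card * ∏ p ∈ S, w p ^ h := by
  rw [← Finset.prod_const, ← Finset.prod_mul_distrib]
  exact Finset.prod_le_prod (fun p _ ↦ divisibilityDensity_nonneg hh (hw p))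
    fun p _ ↦ divisibilityDensity_le hh (hw p)

end CofactorSeries

section CountFullVectors

variable {P : Type*} {h : ℕ} {q : P → ℕ} {κ C θ : ℝ}

theorem abs_sub_le_of_hasSum_comp_div_rpow {B : Type*} {ν : B → ℝ} (hν : ∀ b, 0 < ν b) {A : ℝ → ℝ}
    (hA : ∀ y, 0 < y → |A y - κ * y| ≤ C * y ^ θ) {r x s Z Z' : ℝ} (hx : 0 < x)
    (hs : HasSum (fun b ↦ A ((x / ν b) ^ r)) s) (hZ : HasSum (fun b ↦ ν b ^ (-r)) Z)
    (hZ' : HasSum (fun b ↦ ν b ^ (-(r * θ))) Z') :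
    |s - κ * (x ^ r * Z)| ≤ C * (x ^ (r * θ) * Z') := by
  have hdiff := hs.sub ((hZ.mul_left (x ^ r)).mul_left κ)
  rw [← Real.norm_eq_abs, ← hdiff.tsum_eq]
  refine tsum_of_norm_bounded ((hZ'.mul_left (x ^ (r * θ))).mul_left C) fun b ↦ ?_
  have hscale (t : ℝ) : x ^ t * ν b ^ (-t) = (x / ν b) ^ t := by
    rw [Real.rpow_neg (hν b).le, ← div_eq_mul_inv, Real.div_rpow hx.le (hν b).le]
  have hpos : 0 < x / ν b := div_pos hx (hν b)
  rw [hscale, hscale, Real.rpow_mul hpos.le]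
  exact hA _ (Real.rpow_pos_of_pos hpos r)

theorem summable_rpow_neg_of_abs_card_sub_le (hθ : θ ≤ 1)
    (hfin : ∀ y : ℝ, Finite {f : P →₀ ℕ // ((powProd q f : ℕ) : ℝ) ≤ y})
    (hcount : ∀ y : ℝ, 0 < y →
      |(Nat.card {f : P →₀ ℕ // ((powProd q f : ℕ) : ℝ) ≤ y} : ℝ) - κ * y| ≤ C * y ^ θ)
    {σ : ℝ} (hσ : 1 < σ) : Summable fun p ↦ (q p : ℝ) ^ (-σ) := by
  have hC : 0 ≤ C := by simpa using (abs_nonneg _).trans (hcount 1 one_pos)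
  let φ (n : ℕ) (p : {p // q p ≤ n}) : {f : P →₀ ℕ // ((powProd q f : ℕ) : ℝ) ≤ (n : ℝ)} :=
    ⟨Finsupp.single p.1 1, by simpa [powProd_single] using p.2⟩
  have hφ (n : ℕ) : Function.Injective (φ n) := fun p p' H ↦
    Subtype.ext (Finsupp.single_left_injective one_ne_zero (congrArg Subtype.val H))
  refine summable_rpow_neg_of_isBigO_card (fun n ↦ .of_injective (φ n) (hφ n)) zero_le_one hσ ?_
  refine .of_bound (κ + C) <| (eventually_ge_atTop 1).mono fun n hn ↦ ?_
  have hn : (1 : ℝ) ≤ n := Nat.one_le_cast.2 hn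
  rw [Real.rpow_one, Real.norm_natCast, Real.norm_natCast]
  calc (Nat.card {p // q p ≤ n} : ℝ)
      ≤ Nat.card {f : P →₀ ℕ // ((powProd q f : ℕ) : ℝ) ≤ (n : ℝ)} :=
        Nat.cast_le.2 (Nat.card_le_card_of_injective (φ n) (hφ n))
    _ ≤ κ * n + C * n ^ θ := sub_le_iff_le_add'.1 <| (le_abs_self _).trans <|
        hcount n (by positivity)
    _ ≤ κ * n + C * n ^ (1 : ℝ) := by gcongr
    _ = (κ + C) * n := by rw [Real.rpow_one, add_mul]

/-- The indices `p : P` play the role of Beurling primes of norms `q p`: unique factorization and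
the counting function of the norms are all that is used about ideals. -/
theorem exists_forall_abs_card_fullVectors_sub_le (hq : ∀ p, 0 < q p) (hh : h ≠ 0) (hθ : θ ≤ 1)
    (hθh : h < θ * (h + 1))
    (hfin : ∀ y : ℝ, Finite {f : P →₀ ℕ // ((powProd q f : ℕ) : ℝ) ≤ y})
    (hcount : ∀ y : ℝ, 0 < y →
      |(Nat.card {f : P →₀ ℕ // ((powProd q f : ℕ) : ℝ) ≤ y} : ℝ) - κ * y| ≤ C * y ^ θ) :
    ∃ G : ℝ, ∀ (S : Finset P) (x : ℝ), 0 < x →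
      |(Nat.card {f : P →₀ ℕ // f ∈ fullVectors h S ∧ ((powProd q f : ℕ) : ℝ) ≤ x} : ℝ) -
        (∏ p ∈ S, divisibilityDensity h ((q p : ℝ) ^ (-(1 / (h : ℝ))))) *
          (κ * ∏' p, cofactorEulerFactor h ((q p : ℝ) ^ (-(1 / (h : ℝ))))) * x ^ (1 / (h : ℝ))| ≤
      G * h ^ S.card * x ^ (θ / h) / ∏ p ∈ S, (q p : ℝ) ^ θ := by
  have hh0 : (0 : ℝ) < h := Nat.cast_pos.2 hh.pos
  have hθ0 : 0 < θ := pos_of_mul_pos_left (hh0.trans hθh) (by positivity)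
  have hC : 0 ≤ C := by simpa using (abs_nonneg _).trans (hcount 1 one_pos)
  have hZ := hasSum_residualVectors_rpow_neg hh (s := 1 / h) (by positivity) <|
    summable_rpow_neg_of_abs_card_sub_le hθ hfin hcount
      (by rw [div_mul_eq_mul_div, one_lt_div hh0]; linarith)
  have hZ' := hasSum_residualVectors_rpow_neg hh (s := 1 / h * θ) (by positivity) <|
    summable_rpow_neg_of_abs_card_sub_le hθ hfin hcount
      (by rwa [mul_assoc, div_mul_eq_mul_div, one_mul, one_lt_div hh0])
  set w : P → ℝ := fun p ↦ (q p : ℝ) ^ (-(1 / h * θ))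
  have hw (p : P) : 0 ≤ w p := by positivity
  have hwh (p : P) : w p ^ h = ((q p : ℝ) ^ θ)⁻¹ := by
    rw [← Real.rpow_mul_natCast (Nat.cast_nonneg _), ← Real.rpow_neg (Nat.cast_nonneg _)]
    field_simp
  refine ⟨C * ∏' p, cofactorEulerFactor h (w p), fun S x hx ↦ ?_⟩
  have hmain := abs_sub_le_of_hasSum_comp_div_rpow
    (fun b : residualVectors h S ↦ Nat.cast_pos.2 (powProd_pos hq b.1)) hcount hx
    (hasSum_card_fullVectors hq hh hx.le (hfin x) S) (hZ S) (hZ' S)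
  have hF : 0 ≤ ∏' p, cofactorEulerFactor h (w p) :=
    tprod_nonneg fun p ↦ zero_le_one.trans (one_le_cofactorEulerFactor (hw p))
  calc _ = _ := by congr 2; ring
    _ ≤ C * (x ^ (1 / h * θ) * ((∏ p ∈ S, divisibilityDensity h (w p)) *
          ∏' p, cofactorEulerFactor h (w p))) := hmain
    _ ≤ C * (x ^ (1 / h * θ) * ((h ^ S.card * ∏ p ∈ S, w p ^ h) *
          ∏' p, cofactorEulerFactor h (w p))) := by
        gcongr
        exact prod_divisibilityDensity_le hh hw S
    _ = _ := by
        simp only [hwh, Finset.prod_inv_distrib]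
        rw [one_div_mul_eq_div]
        ring

end CountFullVectors

section PrimeFactorization

open scoped nonZeroDivisors

variable (R : Type*) [CommRing R]

/-- The nonzero prime ideals of `R`, indexing the Euler products. -/
abbrev NonzeroPrime : Type _ := {p : Ideal R // p.IsPrime ∧ p ≠ ⊥}

variable {R}

/-- The ideal `∏ p, p ^ f p` with exponent vector `f`. -/
def idealOfExponents (f : NonzeroPrime R →₀ ℕ) : Ideal R := powProd (fun p ↦ p.1) f

variable [IsDedekindDomain R]

theorem NonzeroPrime.prime (p : NonzeroPrime R) : Prime p.1 :=
  Ideal.prime_of_isPrime p.2.2 p.2.1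

theorem pow_dvd_idealOfExponents_iff {f : NonzeroPrime R →₀ ℕ} {p : NonzeroPrime R} {k : ℕ} :
    p.1 ^ k ∣ idealOfExponents f ↔ k ≤ f p := by
  have hsplit : idealOfExponents f = p.1 ^ f p * idealOfExponents (f.erase p) := by
    rw [idealOfExponents, idealOfExponents, ← powProd_single (fun p : NonzeroPrime R ↦ p.1),
      ← powProd_add, Finsupp.single_add_erase]
  have herase : ¬ p.1 ∣ idealOfExponents (f.erase p) := fun hdvd ↦ by
    obtain ⟨r, hr, hpr⟩ := p.prime.exists_mem_finset_dvd hdvd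
    obtain rfl : p = r := Subtype.ext <|
      (prime_dvd_prime_iff_eq p.prime r.prime).1 (p.prime.dvd_of_dvd_pow hpr)
    simp at hr
  rw [hsplit]
  refine ⟨fun hdvd ↦ le_of_not_gt fun hlt ↦ herase ?_, fun hle ↦
    (pow_dvd_pow _ hle).trans (dvd_mul_right _ _)⟩
  rw [← mul_dvd_mul_iff_left (pow_ne_zero (f p) p.2.2), ← pow_succ]
  exact (pow_dvd_pow _ hlt).trans hdvd

theorem dvd_idealOfExponents_iff {f : NonzeroPrime R →₀ ℕ} {p : NonzeroPrime R} :
    p.1 ∣ idealOfExponents f ↔ f p ≠ 0 := by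
  rw [← Nat.one_le_iff_ne_zero, ← pow_dvd_idealOfExponents_iff, pow_one]

theorem idealOfExponents_ne_zero (f : NonzeroPrime R →₀ ℕ) : idealOfExponents f ≠ 0 :=
  Finset.prod_ne_zero_iff.2 fun p _ ↦ pow_ne_zero _ p.2.2

theorem injective_idealOfExponents :
    Function.Injective (idealOfExponents : (NonzeroPrime R →₀ ℕ) → Ideal R) := fun f g hfg ↦
  Finsupp.ext fun _ ↦ eq_of_forall_le_iff fun _ ↦ by
    rw [← pow_dvd_idealOfExponents_iff, hfg, pow_dvd_idealOfExponents_iff]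

theorem exists_idealOfExponents_eq {I : Ideal R} (hI : I ≠ 0) : ∃ f, idealOfExponents f = I := by
  induction I using UniqueFactorizationMonoid.induction_on_prime with
  | h₁ => exact absurd rfl hI
  | h₂ J hJ => exact ⟨0, (isUnit_iff_eq_one.1 hJ).symm⟩
  | h₃ J p hJ hp ih =>
    obtain ⟨f, rfl⟩ := ih hJ
    refine ⟨.single ⟨p, Ideal.isPrime_of_prime hp, hp.ne_zero⟩ 1 + f, ?_⟩
    rw [idealOfExponents, powProd_add, powProd_single, pow_one, idealOfExponents]

/-- Unique factorization of ideals. -/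
def idealOfExponentsEquiv : (NonzeroPrime R →₀ ℕ) ≃ (Ideal R)⁰ :=
  .ofBijective (fun f ↦ ⟨idealOfExponents f, mem_nonZeroDivisors_of_ne_zero <|
      idealOfExponents_ne_zero f⟩)
    ⟨fun _ _ hfg ↦ injective_idealOfExponents (congrArg Subtype.val hfg), fun I ↦
      (exists_idealOfExponents_eq (nonZeroDivisors.coe_ne_zero I)).imp fun _ ↦ Subtype.ext⟩

theorem card_idealOfExponents_subtype {Q : Ideal R → Prop} (hQ : ∀ {I}, Q I → I ≠ 0) :
    Nat.card {f : NonzeroPrime R →₀ ℕ // Q (idealOfExponents f)} =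
      Nat.card {I : Ideal R // Q I} :=
  Nat.card_congr <| (idealOfExponentsEquiv.subtypeEquiv fun _ ↦ .rfl).trans <|
    Equiv.subtypeSubtypeEquivSubtype fun hI ↦ mem_nonZeroDivisors_of_ne_zero (hQ hI)

variable [Module.Free ℤ R]

theorem absNorm_idealOfExponents (f : NonzeroPrime R →₀ ℕ) :
    Ideal.absNorm (idealOfExponents f) = powProd (fun p ↦ Ideal.absNorm p.1) f :=
  map_powProd Ideal.absNorm.toMonoidHom _ f

theorem NonzeroPrime.one_lt_absNorm [Module.Finite ℤ R] (p : NonzeroPrime R) :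
    1 < Ideal.absNorm p.1 :=
  Nat.one_lt_iff_ne_zero_and_ne_one.2
    ⟨mt Ideal.absNorm_eq_zero_iff.1 p.2.2, mt Ideal.absNorm_eq_one_iff.1 p.2.1.ne_top⟩

variable (R) in
/-- Unique factorization of the ideals of norm at most `y`. -/
def subtypeAbsNormLeEquiv (y : ℝ) :
    {f : NonzeroPrime R →₀ ℕ // ((powProd (fun p ↦ Ideal.absNorm p.1) f : ℕ) : ℝ) ≤ y} ≃
      {I : (Ideal R)⁰ // (Ideal.absNorm (I : Ideal R) : ℝ) ≤ y} :=
  idealOfExponentsEquiv.subtypeEquiv fun f ↦ by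
    rw [← absNorm_idealOfExponents]
    rfl

end PrimeFactorization

section CountHFull

open Module NumberField

theorem divisibilityDensity_rpow_neg {h : ℕ} (hh : h ≠ 0) {N : ℝ} (hN : 0 < N) :
    divisibilityDensity h (N ^ (-(1 / (h : ℝ)))) =
      (N * (1 - N ^ (-(1 : ℝ) / h) + N⁻¹))⁻¹ := by
  have hpow : (N ^ (-(1 / (h : ℝ)))) ^ h = N⁻¹ := by
    rw [Real.rpow_neg hN.le, inv_pow, one_div, Real.rpow_inv_natCast_pow hN.le hh]
  rw [divisibilityDensity, hpow, neg_div, mul_inv, div_eq_mul_inv]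

theorem cofactorEulerFactor_rpow_neg {h : ℕ} (hh : h ≠ 0) {N : ℝ} (hN : 1 < N) :
    cofactorEulerFactor h (N ^ (-(1 / (h : ℝ)))) =
      1 + (N - N ^ ((1 : ℝ) / h)) / (N ^ 2 * (N ^ ((1 : ℝ) / h) - 1)) := by
  have hN0 : 0 ≤ N := zero_le_one.trans hN.le
  have hpow : (N ^ (1 / (h : ℝ))) ^ h = N := by
    rw [one_div, Real.rpow_inv_natCast_pow hN0 hh]
  rw [Real.rpow_neg hN0, cofactorEulerFactor_inv hh (Real.one_lt_rpow hN (by positivity)), hpow]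

theorem exists_forall_abs_idealCount_sub_le {θ : ℝ}
    (hθ : 1 - 1 / (finrank ℚ K : ℝ) ≤ θ) (hθ1 : θ ≤ 1) :
    ∃ C, ∀ y : ℝ, 0 < y → |(idealCount K y : ℝ) - kappa K * y| ≤ C * y ^ θ := by
  have hn : (1 : ℝ) ≤ finrank ℚ K := Nat.one_le_cast.2 finrank_pos
  have hθ0 : 0 ≤ θ := (sub_nonneg.2 (div_le_one_of_le₀ hn (by positivity))).trans hθ
  have hpow : (fun y : ℝ ↦ y ^ (1 - 1 / (finrank ℚ K : ℝ))) =O[atTop] fun y ↦ y ^ θ :=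
    .of_norm_eventuallyLE <| (eventually_ge_atTop 1).mono fun y hy ↦ by
      simp only [Real.norm_of_nonneg (Real.rpow_nonneg (zero_le_one.trans hy) _)]
      exact Real.rpow_le_rpow_of_exponent_le hy hθ
  have hkappa := isBigO_idealCount_sub K
  rw [mul_right_comm, ← kappa] at hkappa
  exact exists_forall_abs_sub_mul_le_rpow hθ0 hθ1
    (Nat.mono_cast.comp (monotone_idealCount K))
    (fun y hy ↦ by simp [idealCount_of_lt_one K hy])
    (hkappa.trans hpow)

theorem finite_powProd_absNorm_le (y : ℝ) : Finite {f : NonzeroPrime (𝓞 K) →₀ ℕ //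
    ((powProd (fun p ↦ Ideal.absNorm p.1) f : ℕ) : ℝ) ≤ y} :=
  .of_equiv _ (subtypeAbsNormLeEquiv (𝓞 K) y).symm

theorem card_powProd_absNorm_le (y : ℝ) :
    Nat.card {f : NonzeroPrime (𝓞 K) →₀ ℕ //
      ((powProd (fun p ↦ Ideal.absNorm p.1) f : ℕ) : ℝ) ≤ y} = idealCount K y :=
  Nat.card_congr (subtypeAbsNormLeEquiv (𝓞 K) y)

theorem mem_fullVectors_iff {h : ℕ} {S : Finset (NonzeroPrime (𝓞 K))}
    {f : NonzeroPrime (𝓞 K) →₀ ℕ} :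
    f ∈ fullVectors h S ↔ IsHFull K h (idealOfExponents f) ∧
      ∀ p ∈ S, p.1 ∣ idealOfExponents f := by
  simp only [fullVectors, Set.mem_ofPred_eq, IsHFull, ne_eq, idealOfExponents_ne_zero,
    not_false_eq_true, true_and, ← dvd_idealOfExponents_iff, ← pow_dvd_idealOfExponents_iff]
  refine and_congr_left' ⟨fun H p hp hdvd ↦ H ⟨p, hp, ?_⟩ hdvd, fun H p ↦ H p.1 p.2.1⟩
  rintro rfl
  exact idealOfExponents_ne_zero f (zero_dvd_iff.1 hdvd)

theorem card_fullVectors_absNorm_le (h : ℕ) (S : Finset (NonzeroPrime (𝓞 K))) (x : ℝ) :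
    Nat.card {f : NonzeroPrime (𝓞 K) →₀ ℕ // f ∈ fullVectors h S ∧
        ((powProd (fun p ↦ Ideal.absNorm p.1) f : ℕ) : ℝ) ≤ x} =
      Nat.card {m : Ideal (𝓞 K) // IsHFull K h m ∧ (Ideal.absNorm m : ℝ) ≤ x ∧
        ∀ p ∈ S, p.1 ∣ m} := by
  rw [← card_idealOfExponents_subtype fun hm ↦ hm.1.1]
  refine Nat.card_congr (Equiv.subtypeEquivRight fun f ↦ ?_)
  rw [mem_fullVectors_iff, absNorm_idealOfExponents, and_assoc, and_comm (b := _ ≤ x)]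

theorem gammaH_eq_tprod_cofactorEulerFactor {h : ℕ} (hh : h ≠ 0) :
    gammaH K h = ∏' p : NonzeroPrime (𝓞 K),
      cofactorEulerFactor h ((Ideal.absNorm p.1 : ℝ) ^ (-(1 / (h : ℝ)))) :=
  tprod_congr fun p ↦
    (cofactorEulerFactor_rpow_neg hh (Nat.one_lt_cast.2 (NonzeroPrime.one_lt_absNorm p))).symm

theorem count_hFull_ideals_divisible_general {h : ℕ} (hh : h ≠ 0) :
    ∃ ξ : ℝ, ξ < 1 ∧ ∃ G : ℝ, ∀ {ι : Type*} [Fintype ι] (p : ι → Ideal (𝓞 K)),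
        Function.Injective p → (∀ i, (p i).IsPrime) → (∀ i, p i ≠ ⊥) →
        ∀ x : ℝ, 0 < x →
        |(Nat.card {m : Ideal (𝓞 K) //
            IsHFull K h m ∧ (Ideal.absNorm m : ℝ) ≤ x ∧ ∀ i, p i ∣ m} : ℝ) -
          (∏ i, ((Ideal.absNorm (p i) : ℝ) *
              (1 - (Ideal.absNorm (p i) : ℝ) ^ (-(1 : ℝ) / h) +
                (Ideal.absNorm (p i) : ℝ)⁻¹))⁻¹) *
            (kappa K * gammaH K h) * x ^ ((1 : ℝ) / h)| ≤
        G * h ^ Fintype.card ι * x ^ (ξ / h) / ∏ i, (Ideal.absNorm (p i) : ℝ) ^ ξ := by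
  have hpos (p : NonzeroPrime (𝓞 K)) := zero_lt_one.trans p.one_lt_absNorm
  have hn : (0 : ℝ) < finrank ℚ K := Nat.cast_pos.2 finrank_pos
  obtain ⟨ξ, hξ, hξ1⟩ := exists_between (a₂ := (1 : ℝ)) <|
    max_lt (sub_lt_self 1 (one_div_pos.2 hn)) <| (div_lt_one (by positivity)).2 (lt_add_one (h : ℝ))
  obtain ⟨hξn, hξh⟩ := max_lt_iff.1 hξ
  obtain ⟨C, hC⟩ := exists_forall_abs_idealCount_sub_le K hξn.le hξ1.le
  obtain ⟨G, hG⟩ := exists_forall_abs_card_fullVectors_sub_le hpos hh hξ1.le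
    ((div_lt_iff₀ (by positivity)).1 hξh) (finite_powProd_absNorm_le K)
    (by simpa only [card_powProd_absNorm_le] using hC)
  refine ⟨ξ, hξ1, G, fun p hinj hp hp0 x hx ↦ ?_⟩
  let e : _ ↪ NonzeroPrime (𝓞 K) :=
    ⟨fun i ↦ ⟨p i, hp i, hp0 i⟩, fun _ _ hij ↦ hinj (congrArg Subtype.val hij)⟩
  have hcount := hG (Finset.univ.map e) x hx
  simp only [card_fullVectors_absNorm_le, ← gammaH_eq_tprod_cofactorEulerFactor K hh,
    divisibilityDensity_rpow_neg hh (Nat.cast_pos.2 (hpos _)), Finset.prod_map, Finset.card_map,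
    Finset.card_univ, Finset.forall_mem_map, Finset.mem_univ, true_imp_iff] at hcount
  exact hcount

end CountHFull

/-- **Counting `h`-full ideals divisible by given distinct primes `p_1, …, p_u`**:
there is `ξ = ξ(h,K) < 1` such that the count equals
`(∏_i 1/(N(p_i)(1 - N(p_i)^{-1/h} + N(p_i)^{-1}))) κ γ_h x^{1/h}
  + O_{h,u}(x^{ξ/h}/∏_i N(p_i)^ξ)`. -/
theorem count_hFull_ideals_divisible (h : ℕ) (hh : 2 ≤ h) :
    ∃ ξ : ℝ, ξ < 1 ∧ ∀ u : ℕ, ∃ C : ℝ,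
      ∀ p : Fin u → Ideal (NumberField.RingOfIntegers K),
        Function.Injective p → (∀ i, (p i).IsPrime) → (∀ i, p i ≠ ⊥) →
        ∀ x : ℝ, 2 ≤ x →
        |(Nat.card {m : Ideal (NumberField.RingOfIntegers K) //
            IsHFull K h m ∧ (Ideal.absNorm m : ℝ) ≤ x ∧ ∀ i, p i ∣ m} : ℝ) -
          (∏ i : Fin u, ((Ideal.absNorm (p i) : ℝ) *
              (1 - (Ideal.absNorm (p i) : ℝ) ^ (-(1 : ℝ)/h) +
                (Ideal.absNorm (p i) : ℝ)⁻¹))⁻¹) *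
            (kappa K * gammaH K h) * x ^ ((1 : ℝ)/h)| ≤
        C * x ^ (ξ/h) / ∏ i : Fin u, (Ideal.absNorm (p i) : ℝ) ^ ξ := by
  obtain ⟨ξ, hξ, G, hG⟩ := count_hFull_ideals_divisible_general K (by lia : h ≠ 0)
  exact ⟨ξ, hξ, fun u ↦ ⟨G * h ^ u, fun p hinj hp hp0 x hx ↦ by
    simpa only [Fintype.card_fin] using hG p hinj hp hp0 x (two_pos.trans_le hx)⟩⟩

end
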